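/- Let u be a very weak solution with integrability deficit δ ∈ (0,1), and assume the p-intrinsic hypotheses. Then for every θ ∈ ((q−1)/p, δ] and every s ∈ [2ρ, 4ρ] there exists a constant c = c(data) such that ⨍_{Q^π_s(z₀)} |u − (u)_{Q^π_s(z₀)}|^{θp}/s^{θp} dz ≤ c ⨍_{Q^π_s(z₀)} (H(z,|∇u|) + H(z,|F|))^θ dz. -/

import Mathlib

open MeasureTheory Set Metric Filter
open scoped ENNReal NNReal Topology BigOperators Classical

noncomputable section

namespace DoublePhase

/-- Spatial points: ℝⁿ. -/
abbrev Spc (n : ℕ) : Type := EuclideanSpace ℝ (Fin n)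
/-- Space-time points `z = (x,t)`. -/
abbrev Pt (n : ℕ) : Type := Spc n × ℝ
/-- Values in ℝᴺ. -/
abbrev Vec (N : ℕ) : Type := Fin N → ℝ
/-- Matrices in ℝ^{N×n}. -/
abbrev Mat (N n : ℕ) : Type := Fin N → Fin n → ℝ

/-- Euclidean inner product on ℝᴺ. -/
def vdot {N : ℕ} (v w : Vec N) : ℝ := ∑ i, v i * w i
/-- Euclidean norm on ℝᴺ. -/
def vnorm {N : ℕ} (v : Vec N) : ℝ := Real.sqrt (vdot v v)
/-- Euclidean inner product on ℝ^{N×n}. -/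
def mdot {N n : ℕ} (A B : Mat N n) : ℝ := ∑ i, ∑ j, A i j * B i j
/-- Euclidean norm on ℝ^{N×n}. -/
def mnorm {N n : ℕ} (A : Mat N n) : ℝ := Real.sqrt (mdot A A)

/-- Parabolic cylinder `Q_{r,s}(z₀) = B_r(x₀) × (t₀−s, t₀+s)`. -/
def Qrs {n : ℕ} (z₀ : Pt n) (r s : ℝ) : Set (Pt n) :=
  (Metric.ball z₀.1 r) ×ˢ (Set.Ioo (z₀.2 - s) (z₀.2 + s))

/-- Standard parabolic cylinder `Q_ρ(z₀) = B_ρ(x₀) × (t₀−ρ², t₀+ρ²)`. -/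
def Qc {n : ℕ} (z₀ : Pt n) (ρ : ℝ) : Set (Pt n) := Qrs z₀ ρ (ρ ^ 2)

/-- The double-phase function `H(z,s) = s^p + a(z) s^q`. -/
def Hf {n : ℕ} (a : Pt n → ℝ) (p q : ℝ) (z : Pt n) (s : ℝ) : ℝ := s ^ p + a z * s ^ q

/-- `p`-intrinsic cylinder `Q_ρ^λ(z₀) = B_ρ(x₀) × (t₀−λ^{2−p}ρ², t₀+λ^{2−p}ρ²)`. -/
def Qp {n : ℕ} (p : ℝ) (z₀ : Pt n) (lam ρ : ℝ) : Set (Pt n) :=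
  Qrs z₀ ρ (lam ^ (2 - p) * ρ ^ 2)

/-- `(p,q)`-intrinsic cylinder `G_ρ^λ(z₀)`. -/
def Gpq {n : ℕ} (a : Pt n → ℝ) (p q : ℝ) (z₀ : Pt n) (lam ρ : ℝ) : Set (Pt n) :=
  Qrs z₀ ρ (lam ^ 2 / Hf a p q z₀ lam * ρ ^ 2)

/-- The space-time domain `Ω_T = Ω × (0,T)`. -/
def cyl {n : ℕ} (Ω : Set (Spc n)) (T : ℝ) : Set (Pt n) := Ω ×ˢ Set.Ioo 0 T

/-- Spatial partial derivative `∂_{x_j} ψ` of a scalar test function. -/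
def dxj {n : ℕ} (ψ : Pt n → ℝ) (j : Fin n) (z : Pt n) : ℝ :=
  fderiv ℝ ψ z (EuclideanSpace.single j 1, 0)

/-- Time derivative `∂_t φ` of a vector-valued test function. -/
def dtd {n N : ℕ} (φ : Pt n → Vec N) (z : Pt n) : Vec N :=
  fderiv ℝ φ z ((0 : Spc n), (1 : ℝ))

/-- Spatial gradient `∇φ` of a vector-valued test function, as a matrix. -/
def gradm {n N : ℕ} (φ : Pt n → Vec N) (z : Pt n) : Mat N n :=
  fun i j => fderiv ℝ (fun w => φ w i) z (EuclideanSpace.single j 1, 0)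

/-- The structural setting of the parabolic double-phase problem:
`data = (n, N, p, q, α, L₁, L₂, [a]_α)` together with the bounded domain `Ω`,
time `T`, the coefficient `a`, the vector field `𝒜` and the source `F`. -/
structure Setting (n N : ℕ) (p q α L₁ L₂ aH : ℝ) where
  Ω : Set (Spc n)
  T : ℝ
  a : Pt n → ℝ
  A : Pt n → Mat N n → Mat N n
  F : Pt n → Mat N n
  hn : 2 ≤ n
  hN : 1 ≤ N
  hΩo : IsOpen Ω
  hΩb : Bornology.IsBounded Ω
  hΩne : Ω.Nonempty
  hT : 0 < T
  hα : α ∈ Set.Ioc (0 : ℝ) 1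
  hp2 : 2 < p
  hpq : p < q
  hqub : q < p + 2 * α / ((n : ℝ) + 2)
  hL₁ : 0 < L₁
  hL₁₂ : L₁ ≤ L₂
  haH : 0 < aH
  ha0 : ∀ z, 0 ≤ a z
  haM : Measurable a
  haB : BddAbove (Set.range a)
  haHol : ∀ x ∈ Ω, ∀ y ∈ Ω, ∀ t ∈ Set.Ioo (0 : ℝ) T, ∀ s ∈ Set.Ioo (0 : ℝ) T,
    |a (x, t) - a (y, s)| ≤ aH * max (‖x - y‖ ^ α) (|t - s| ^ (α / 2))
  hAM : Measurable (Function.uncurry A)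
  hAcoer : ∀ᵐ z ∂(volume.restrict (cyl Ω T)), ∀ ξ : Mat N n,
    L₁ * (mnorm ξ ^ p + a z * mnorm ξ ^ q) ≤ mdot (A z ξ) ξ
  hAgrow : ∀ᵐ z ∂(volume.restrict (cyl Ω T)), ∀ ξ : Mat N n,
    mnorm (A z ξ) ≤ L₂ * (mnorm ξ ^ (p - 1) + a z * mnorm ξ ^ (q - 1))
  hFM : Measurable F
  hFint : IntegrableOn (fun z => Hf a p q z (mnorm (F z))) (cyl Ω T)

variable {n N : ℕ} {p q α L₁ L₂ aH : ℝ}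

/-- The right-hand side field `|F|^{p−2}F + a|F|^{q−2}F`. -/
def rhsF (S : Setting n N p q α L₁ L₂ aH) (z : Pt n) : Mat N n :=
  fun i j => mnorm (S.F z) ^ (p - 2) * S.F z i j + S.a z * mnorm (S.F z) ^ (q - 2) * S.F z i j

/-- Very weak solution with integrability deficit `δ`: `u ∈ L¹(0,T;W^{1,1})` with
weak spatial gradient `Du`, `H(·,|Du|)^δ` integrable, satisfying the weak formulation. -/
structure VeryWeakSolution (S : Setting n N p q α L₁ L₂ aH)
    (u : Pt n → Vec N) (Du : Pt n → Mat N n) (δ : ℝ) : Prop where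
  hδ : δ ∈ Set.Ioo (0 : ℝ) 1
  huM : Measurable u
  hDuM : Measurable Du
  huL1 : IntegrableOn (fun z => vnorm (u z)) (cyl S.Ω S.T)
  hDuL1 : IntegrableOn (fun z => mnorm (Du z)) (cyl S.Ω S.T)
  hgrad : ∀ (i : Fin N) (j : Fin n) (ψ : Pt n → ℝ),
    ContDiff ℝ (⊤ : ℕ∞) ψ → HasCompactSupport ψ → tsupport ψ ⊆ cyl S.Ω S.T →
    ∫ z in cyl S.Ω S.T, u z i * dxj ψ j z = - ∫ z in cyl S.Ω S.T, Du z i j * ψ z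
  henergy : IntegrableOn (fun z => Hf S.a p q z (mnorm (Du z)) ^ δ) (cyl S.Ω S.T)
  hweak : ∀ φ : Pt n → Vec N,
    ContDiff ℝ (⊤ : ℕ∞) φ → HasCompactSupport φ → tsupport φ ⊆ cyl S.Ω S.T →
    ∫ z in cyl S.Ω S.T, (-(vdot (u z) (dtd φ z)) + mdot (S.A z (Du z)) (gradm φ z))
      = ∫ z in cyl S.Ω S.T, mdot (rhsF S z) (gradm φ z)

/-- `H(z,|∇u|)`. -/
def HDu (S : Setting n N p q α L₁ L₂ aH) (Du : Pt n → Mat N n) (z : Pt n) : ℝ :=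
  Hf S.a p q z (mnorm (Du z))

/-- `H(z,|F|)`. -/
def HFf (S : Setting n N p q α L₁ L₂ aH) (z : Pt n) : ℝ :=
  Hf S.a p q z (mnorm (S.F z))

/-- Componentwise integral average `(u)_E` of a vector-valued function. -/
def vavg {n N : ℕ} (u : Pt n → Vec N) (E : Set (Pt n)) : Vec N := fun i => ⨍ z in E, u z i

/-- The `p`-intrinsic hypotheses \eqref{eq_pcase}-\eqref{eq_rho_decay}. -/
structure PHyp (S : Setting n N p q α L₁ L₂ aH) (Du : Pt n → Mat N n)
    (z₀ : Pt n) (π ρ δ : ℝ) : Prop where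
  hz₀ : z₀ ∈ cyl S.Ω S.T
  hπ : 1 < π
  hρ : ρ ∈ Set.Ioo (0 : ℝ) 1
  hcase : S.a z₀ * π ^ q ≤ π ^ p
  hsub : Qp p z₀ π (16 * ρ) ⊆ cyl S.Ω S.T
  hlow : π ^ (δ * p) ≤ ⨍ z in Qp p z₀ π ρ, (HDu S Du z + HFf S z) ^ δ
  hup : (⨍ z in Qp p z₀ π (16 * ρ), (HDu S Du z + HFf S z) ^ δ) ≤ π ^ (δ * p)
  hdecay : ρ ^ α ≤ π ^ (p - q)

/-- The `(p,q)`-intrinsic hypotheses \eqref{eq_pqcase}-\eqref{eq_pq4}. -/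
structure PQHyp (S : Setting n N p q α L₁ L₂ aH) (Du : Pt n → Mat N n)
    (z₀ : Pt n) (π ρ δ : ℝ) : Prop where
  hz₀ : z₀ ∈ cyl S.Ω S.T
  hπ : 1 < π
  hρ : ρ ∈ Set.Ioo (0 : ℝ) 1
  hcase : π ^ p < S.a z₀ * π ^ q
  hsub : Gpq S.a p q z₀ π (16 * ρ) ⊆ cyl S.Ω S.T
  hcomp : ∀ z ∈ Qc z₀ (10 * ρ), S.a z₀ / 2 ≤ S.a z ∧ S.a z ≤ 2 * S.a z₀
  hlow : Hf S.a p q z₀ π ^ δ ≤ ⨍ z in Gpq S.a p q z₀ π ρ, (HDu S Du z + HFf S z) ^ δ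
  hup : (⨍ z in Gpq S.a p q z₀ π (16 * ρ), (HDu S Du z + HFf S z) ^ δ) ≤ Hf S.a p q z₀ π ^ δ

/-- Strong maximal function over parabolic cylinders. -/
def strongMax {n : ℕ} (f : Pt n → ℝ) (z : Pt n) : ℝ :=
  sSup {m : ℝ | ∃ (w : Pt n) (r s : ℝ), 0 < r ∧ 0 < s ∧ z ∈ Qrs w r s ∧
    m = ⨍ y in Qrs w r s, |f y|}

/-- The function `g = (|∇u| + |u−u₀|/ρ + |F|) χ_{𝒬₂}`. -/
def gW (S : Setting n N p q α L₁ L₂ aH) (u : Pt n → Vec N) (Du : Pt n → Mat N n)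
    (Q2 : Set (Pt n)) (ρ : ℝ) (z : Pt n) : ℝ :=
  Q2.indicator (fun w => mnorm (Du w) + vnorm (u w - vavg u Q2) / ρ + mnorm (S.F w)) z

/-- Hölder extension of `a` to all of ℝ^{n+1}. -/
def aExt (S : Setting n N p q α L₁ L₂ aH) (Q2 : Set (Pt n)) (z : Pt n) : ℝ :=
  sInf {v : ℝ | ∃ w ∈ cyl S.Ω S.T,
    v = Q2.indicator S.a w + aH * (‖z.1 - w.1‖ ^ α + |z.2 - w.2| ^ (α / 2))}

/-- Hölder extension of `a` truncated between `inf_{𝒬₂} a` and `sup_{𝒬₂} a`. -/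
def aStar (S : Setting n N p q α L₁ L₂ aH) (Q2 : Set (Pt n)) (z : Pt n) : ℝ :=
  max (min (aExt S Q2 z) (sSup (S.a '' Q2))) (sInf (S.a '' Q2))

/-- The maximal weight `Υ(z) = (M(g^{q−1} + (a g^q)^{(q−1)/p})(z))^{p/(q−1)}`. -/
def Ups (S : Setting n N p q α L₁ L₂ aH) (u : Pt n → Vec N) (Du : Pt n → Mat N n)
    (Q2 : Set (Pt n)) (ρ : ℝ) (z : Pt n) : ℝ :=
  strongMax (fun w => gW S u Du Q2 ρ w ^ (q - 1)
      + (aStar S Q2 w * gW S u Du Q2 ρ w ^ q) ^ ((q - 1) / p)) z ^ (p / (q - 1))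

/-- `Υ̂(z) = max{Υ(z), θΠ}`. -/
def UpsHat (S : Setting n N p q α L₁ L₂ aH) (u : Pt n → Vec N) (Du : Pt n → Mat N n)
    (Q2 : Set (Pt n)) (ρ θ Pi' : ℝ) (z : Pt n) : ℝ :=
  max (Ups S u Du Q2 ρ z) (θ * Pi')

/-- `‖a‖_{L^∞(Ω_T)}`. -/
def supA (S : Setting n N p q α L₁ L₂ aH) : ℝ := sSup (S.a '' cyl S.Ω S.T)

/-- The constant `K = ((1+‖a‖_∞)/|B₁| ∬ Υ^μ)^{α/(n+2)}`. -/
def Kconst (S : Setting n N p q α L₁ L₂ aH) (u : Pt n → Vec N) (Du : Pt n → Mat N n)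
    (Q2 : Set (Pt n)) (ρ μ : ℝ) : ℝ :=
  (((1 + supA S) / (volume (Metric.ball (0 : Spc n) 1)).toReal)
      * ∫ z, Ups S u Du Q2 ρ z ^ μ) ^ (α / ((n : ℝ) + 2))

/-- Conditions \eqref{def_mu}-\eqref{def_mu_2} on `μ`. -/
def muCond (n : ℕ) (p q α μ : ℝ) : Prop :=
  max (1 - 2 / q + ((n : ℝ) + 2) * (q - p) / (q * α)) ((q - 1) / p) < μ ∧ μ < 1 ∧
    (1 / μ - 1) * (2 * (n : ℝ)) / (((n : ℝ) + 2) * q) + (n : ℝ) / ((n : ℝ) + 2) ≤ p / q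

/-- Condition \eqref{def_mfs} on `γ`. -/
def gammaCond (n : ℕ) (p q α μ γ : ℝ) : Prop :=
  0 < γ ∧ γ < 1 ∧ -(2 * α) / ((n : ℝ) + 2) + α * q * (1 - μ) / ((n : ℝ) + 2) < p - q - γ

/-- Condition \eqref{def_mfc} on the structural constant `c₀`. -/
def c0Cond (S : Setting n N p q α L₁ L₂ aH) (u : Pt n → Vec N) (Du : Pt n → Mat N n)
    (Q2 : Set (Pt n)) (ρ θ μ γ c₀ : ℝ) : Prop :=
  1 < c₀ ∧
    Kconst S u Du Q2 ρ μ * (θ * c₀ / (2 * (1 + supA S))) ^ (-(γ / p))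
      ≤ 1 / (800 * (1 + aH))

/-- The cylinder `𝒬` of \eqref{def_Qi}: `p`-intrinsic or `(p,q)`-intrinsic by phase. -/
def QorG (S : Setting n N p q α L₁ L₂ aH) (z₀ : Pt n) (π r : ℝ) : Set (Pt n) :=
  if S.a z₀ * π ^ q ≤ π ^ p then Qp p z₀ π r else Gpq S.a p q z₀ π r

/-- Half-length `σ` of the time interval of `𝒬`. -/
def sigmaOf (S : Setting n N p q α L₁ L₂ aH) (z₀ : Pt n) (π r : ℝ) : ℝ :=
  if S.a z₀ * π ^ q ≤ π ^ p then π ^ (2 - p) * r ^ 2 else π ^ 2 / Hf S.a p q z₀ π * r ^ 2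

/-- `Π_{z₀}` of \eqref{def_Pizo}. -/
def PiZ (S : Setting n N p q α L₁ L₂ aH) (z₀ : Pt n) (π : ℝ) : ℝ :=
  if S.a z₀ * π ^ q ≤ π ^ p then Hf S.a p q z₀ π else π ^ p

/-- Upper level set `Ψ(Λ)` of `H(z,|∇u|)`. -/
def PsiSet (S : Setting n N p q α L₁ L₂ aH) (Du : Pt n → Mat N n) (Λ : ℝ) : Set (Pt n) :=
  {z ∈ cyl S.Ω S.T | Λ < HDu S Du z}

/-- Upper level set `Φ(Λ)` of `H(z,|F|)`. -/
def PhiSet (S : Setting n N p q α L₁ L₂ aH) (Λ : ℝ) : Set (Pt n) :=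
  {z ∈ cyl S.Ω S.T | Λ < HFf S z}

/-- `Π > c₀` for the structural constant `c₀` of the paper. -/
def PiBig (S : Setting n N p q α L₁ L₂ aH) (u : Pt n → Vec N) (Du : Pt n → Mat N n)
    (z₀ : Pt n) (π ρ : ℝ) : Prop :=
  ∃ θ μ γ c₀ : ℝ, θ ∈ Set.Ioo (0 : ℝ) 1 ∧ muCond n p q α μ ∧ gammaCond n p q α μ γ ∧
    c0Cond S u Du (QorG S z₀ π (4 * ρ)) ρ θ μ γ c₀ ∧ c₀ < Hf S.a p q z₀ π

/-- `u ∈ C(0,T; L²(Ω,ℝᴺ))`. -/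
def ContL2 (S : Setting n N p q α L₁ L₂ aH) (u : Pt n → Vec N) : Prop :=
  (∀ t ∈ Set.Ioo (0 : ℝ) S.T, IntegrableOn (fun x => vnorm (u (x, t)) ^ 2) S.Ω) ∧
  ∀ t₁ ∈ Set.Ioo (0 : ℝ) S.T, ∀ ε > (0 : ℝ), ∃ η > (0 : ℝ), ∀ t₂ ∈ Set.Ioo (0 : ℝ) S.T,
    |t₂ - t₁| < η → ∫ x in S.Ω, vnorm (u (x, t₂) - u (x, t₁)) ^ 2 < ε

/-- The Vitali covering cylinder `U(w)`: `Q^{π_w}_{2ρ_w}(w)` or `G^{π_w}_{2ρ_w}(w)` by phase. -/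
def Uw (S : Setting n N p q α L₁ L₂ aH) (w : Pt n) (πw ρw : ℝ) : Set (Pt n) :=
  if S.a w * πw ^ q ≤ πw ^ p then Qp p w πw (2 * ρw) else Gpq S.a p q w πw (2 * ρw)

end DoublePhase

open DoublePhase

/-!
The oscillation of each component `uᵢ` over the cylinder is split by comparing the slices `uᵢ(·,t)`
with their means against a smooth spatial weight. Within a slice the difference is controlled by the
spatial gradient, by integrating along segments; between two slices the weighted means differ by at
most the integral of the flux `𝒜(z,∇u) − |F|^{p−2}F − a|F|^{q−2}F`, by testing the equation with the
weight. Both bounds are proved for mollifications and pass to `u` by Fatou's lemma.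

On the `p`-intrinsic cylinder `a ≤ (1 + 4[a]_α) π^{p−q}`, and the upper intrinsic bound gives
`(⨍ E^θ)^{1/(θp)} ≤ 8^{n+2} π` for `E = H(z,|∇u|) + H(z,|F|)`. Jensen's inequality then bounds the
mean flux by a multiple of `π^{p−2} (⨍ E^θ)^{1/(θp)}`, and the factor `π^{p−2}` cancels the time
scale `π^{2−p}` of the cylinder.
-/

namespace DoublePhase

/-! ### Averages and Jensen's inequality -/

section Averages

variable {X : Type*} [MeasurableSpace X] {μ ν : Measure X} {r t : ℝ}

theorem rpow_lintegral_le_lintegral_rpow [IsProbabilityMeasure ν] {f : X → ℝ≥0∞}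
    (hf : AEMeasurable f ν) (hr : 1 ≤ r) : (∫⁻ x, f x ∂ν) ^ r ≤ ∫⁻ x, f x ^ r ∂ν := by
  have hr0 : 0 < r := by positivity
  have h := eLpNorm'_le_eLpNorm'_of_exponent_le one_pos hr ν hf.aestronglyMeasurable
  simp only [eLpNorm', enorm_eq_self, ENNReal.rpow_one, div_one] at h
  simpa only [one_div] using (ENNReal.le_rpow_inv_iff hr0).1 (by simpa only [one_div] using h)

theorem lintegral_rpow_le_rpow_lintegral [IsProbabilityMeasure ν] {f : X → ℝ≥0∞}
    (hf : AEMeasurable f ν) (ht : 0 < t) (htr : t ≤ r) :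
    ∫⁻ x, f x ^ t ∂ν ≤ (∫⁻ x, f x ^ r ∂ν) ^ (t / r) := by
  have hr : 0 < r := ht.trans_le htr
  have jensen := rpow_lintegral_le_lintegral_rpow (hf.pow_const t) ((one_le_div ht).2 htr)
  simp_rw [← ENNReal.rpow_mul, mul_div_cancel₀ r ht.ne'] at jensen
  rwa [← inv_div r t, ENNReal.le_rpow_inv_iff (by positivity)]

theorem laverage_rpow_le_rpow_laverage [IsFiniteMeasure μ] [NeZero μ] {f : X → ℝ≥0∞}
    (hf : AEMeasurable f μ) (ht : 0 < t) (htr : t ≤ r) :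
    ⨍⁻ x, f x ^ t ∂μ ≤ (⨍⁻ x, f x ^ r ∂μ) ^ (t / r) :=
  lintegral_rpow_le_rpow_lintegral (hf.smul_measure _) ht htr

theorem enorm_sub_integral_rpow_le [IsProbabilityMeasure ν] {G : Type*} [NormedAddCommGroup G]
    [NormedSpace ℝ G] [CompleteSpace G] {f : X → G} (hf : Integrable f ν) (hr : 1 ≤ r) (c : G) :
    ‖c - ∫ y, f y ∂ν‖ₑ ^ r ≤ ∫⁻ y, ‖c - f y‖ₑ ^ r ∂ν := by
  have hmean : c - ∫ y, f y ∂ν = ∫ y, (c - f y) ∂ν := by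
    rw [integral_sub (integrable_const c) hf, integral_const, probReal_univ, one_smul]
  rw [hmean]
  exact (ENNReal.rpow_le_rpow (enorm_integral_le_lintegral_enorm _) (by positivity)).trans
    (rpow_lintegral_le_lintegral_rpow (aestronglyMeasurable_const.sub hf.1).enorm hr)

theorem laverage_enorm_sub_average_rpow_le [IsFiniteMeasure μ] [NeZero μ] {f : X → ℝ}
    (hf : Integrable f μ) (hr : 1 ≤ r) :
    ⨍⁻ x, ‖f x - ⨍ y, f y ∂μ‖ₑ ^ r ∂μ ≤ ⨍⁻ x, ⨍⁻ y, ‖f x - f y‖ₑ ^ r ∂μ ∂μ :=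
  lintegral_mono fun x => enorm_sub_integral_rpow_le hf.to_average hr (f x)

theorem setLAverage_le_mul_setLAverage {s t : Set X} {C : ℝ≥0} (hst : s ⊆ t) (ht : μ t ≠ 0)
    (hC : μ t ≤ C * μ s) (f : X → ℝ≥0∞) :
    ⨍⁻ x in s, f x ∂μ ≤ C * ⨍⁻ x in t, f x ∂μ := by
  have hinv : (μ s)⁻¹ ≤ C * (μ t)⁻¹ := by
    rw [← div_eq_mul_inv, ENNReal.le_div_iff_mul_le (.inl ht) (.inr ENNReal.coe_ne_top), mul_comm,
      ← div_eq_mul_inv]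
    exact ENNReal.div_le_of_le_mul hC
  rw [setLAverage_eq, setLAverage_eq, div_eq_mul_inv, div_eq_mul_inv, mul_left_comm]
  exact mul_le_mul' (lintegral_mono_set hst) hinv

theorem setLAverage_setLAverage_le {s : Set X} {f : X → X → ℝ≥0∞} {a b : ℝ≥0∞} (hs0 : μ s ≠ 0)
    (hs : μ s ≠ ⊤) (h : ∫⁻ x in s, ∫⁻ y in s, f x y ∂μ ∂μ ≤ μ s * a + μ s ^ 2 * b) :
    ⨍⁻ x in s, ⨍⁻ y in s, f x y ∂μ ∂μ ≤ a / μ s + b := by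
  simp only [setLAverage_eq, div_eq_mul_inv]
  rw [lintegral_mul_const' _ _ (ENNReal.inv_ne_top.2 hs0)]
  calc (∫⁻ x in s, ∫⁻ y in s, f x y ∂μ ∂μ) * (μ s)⁻¹ * (μ s)⁻¹
      ≤ (μ s * a + μ s ^ 2 * b) * (μ s)⁻¹ * (μ s)⁻¹ :=
        mul_le_mul' (mul_le_mul' h le_rfl) le_rfl
    _ = (μ s * (μ s)⁻¹) * (a * (μ s)⁻¹) + (μ s * (μ s)⁻¹) * (μ s * (μ s)⁻¹) * b := by ring
    _ = a * (μ s)⁻¹ + b := by rw [ENNReal.mul_inv_cancel hs0 hs]; ring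

theorem isProbabilityMeasure_withDensity_ofReal {η : X → ℝ} (hη : Integrable η μ) (h0 : 0 ≤ η)
    (h1 : ∫ x, η x ∂μ = 1) :
    IsProbabilityMeasure (μ.withDensity fun x => ENNReal.ofReal (η x)) := by
  constructor
  rw [withDensity_apply _ MeasurableSet.univ, Measure.restrict_univ,
    ← ofReal_integral_eq_lintegral_ofReal hη (Eventually.of_forall h0), h1, ENNReal.ofReal_one]

end Averages

/-! ### The Poincaré inequality on bounded convex sets -/

section ConvexPoincare

variable {E G : Type*} [NormedAddCommGroup E] [NormedSpace ℝ E] [NormedAddCommGroup G]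
  [NormedSpace ℝ G] {w : E → G} {r h : ℝ}

theorem enorm_sub_rpow_le_lintegral_segment (hw : ContDiff ℝ 1 w) (hr : 1 ≤ r) (x y : E) :
    ‖w y - w x‖ₑ ^ r ≤
      ‖y - x‖ₑ ^ r * ∫⁻ h in Icc (0 : ℝ) 1, ‖fderiv ℝ w (x + h • (y - x))‖ₑ ^ r := by
  have hr0 : 0 ≤ r := by positivity
  have : IsProbabilityMeasure (volume.restrict (Icc (0 : ℝ) 1)) := ⟨by simp⟩
  have hderiv (h : ℝ) : deriv (fun h : ℝ => w (x + h • (y - x))) h =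
      fderiv ℝ w (x + h • (y - x)) (y - x) := by
    have hseg : HasDerivAt (fun h : ℝ => x + h • (y - x)) (y - x) h := by
      simpa using ((hasDerivAt_id h).smul_const (y - x)).const_add x
    exact ((hw.differentiable one_ne_zero _).hasFDerivAt.comp_hasDerivAt h hseg).deriv
  have hftc := enorm_sub_le_lintegral_deriv_of_contDiffOn_Icc
    (f := fun h : ℝ => w (x + h • (y - x))) (a := 0) (b := 1)
    (ContDiff.contDiffOn (by fun_prop)) zero_le_one
  simp only [one_smul, zero_smul, add_zero, add_sub_cancel, hderiv] at hftc
  have hmeas : Measurable fun h : ℝ => ‖fderiv ℝ w (x + h • (y - x))‖ₑ :=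
    (Continuous.enorm (by fun_prop)).measurable
  calc ‖w y - w x‖ₑ ^ r
      ≤ (∫⁻ h in Icc (0 : ℝ) 1, ‖y - x‖ₑ * ‖fderiv ℝ w (x + h • (y - x))‖ₑ) ^ r := by
        gcongr
        refine hftc.trans (lintegral_mono fun h => ?_)
        exact (ContinuousLinearMap.le_opENorm _ _).trans_eq (mul_comm _ _)
    _ = ‖y - x‖ₑ ^ r * (∫⁻ h in Icc (0 : ℝ) 1, ‖fderiv ℝ w (x + h • (y - x))‖ₑ) ^ r := by
        rw [lintegral_const_mul _ hmeas, ENNReal.mul_rpow_of_nonneg _ _ hr0]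
    _ ≤ _ := by
        gcongr
        exact rpow_lintegral_le_lintegral_rpow hmeas.aemeasurable hr

variable [MeasurableSpace E] [BorelSpace E] [FiniteDimensional ℝ E] {μ : Measure E}
  [μ.IsAddHaarMeasure] {f : E → ℝ≥0∞} {B : Set E}

theorem lintegral_comp_add_smul_le (hf : Measurable f) (a : E) (hh : 1 / 2 ≤ h) :
    ∫⁻ y, f (a + h • y) ∂μ ≤ 2 ^ Module.finrank ℝ E * ∫⁻ y, f y ∂μ := by
  have h0 : 0 < h := by linarith
  have hdilate : ∫⁻ y, f (a + h • y) ∂μ = ∫⁻ y, f (a + y) ∂(μ.map (h • ·)) := by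
    rw [lintegral_map (by fun_prop) (by fun_prop)]
  rw [hdilate, Measure.map_addHaar_smul _ h0.ne', lintegral_smul_measure,
    lintegral_add_left_eq_self f a, smul_eq_mul, abs_of_pos (by positivity), ← inv_pow,
    ENNReal.ofReal_pow (by positivity)]
  gcongr
  rw [← ENNReal.ofReal_ofNat 2]
  exact ENNReal.ofReal_le_ofReal (inv_le_of_inv_le₀ two_pos (by linarith))

theorem setLIntegral_setLIntegral_segment_le (hf : Measurable f) (h : ℝ) :
    ∫⁻ x in B, ∫⁻ y in B, f (x + h • (y - x)) ∂μ ∂μ ≤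
      2 ^ Module.finrank ℝ E * μ B * ∫⁻ x, f x ∂μ := by
  have hconst : ∫⁻ _ in B, 2 ^ Module.finrank ℝ E * ∫⁻ y, f y ∂μ ∂μ =
      2 ^ Module.finrank ℝ E * μ B * ∫⁻ x, f x ∂μ := by
    rw [setLIntegral_const]; ring
  -- Change variables in whichever endpoint has weight at least `1 / 2`.
  rcases le_total (1 / 2) h with hhalf | hhalf
  · refine (lintegral_mono fun x => (setLIntegral_le_lintegral _ _).trans ?_).trans_eq hconst
    simp_rw [show ∀ y, x + h • (y - x) = x - h • x + h • y from fun y => by module]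
    exact lintegral_comp_add_smul_le hf _ hhalf
  · have hswap : ∫⁻ x in B, ∫⁻ y in B, f (x + h • (y - x)) ∂μ ∂μ =
        ∫⁻ y in B, ∫⁻ x in B, f (x + h • (y - x)) ∂μ ∂μ := by
      apply lintegral_lintegral_swap
      exact (hf.comp (by fun_prop)).aemeasurable
    rw [hswap]
    refine (lintegral_mono fun y => (setLIntegral_le_lintegral _ _).trans ?_).trans_eq hconst
    simp_rw [show ∀ x, x + h • (y - x) = h • y + (1 - h) • x from fun x => by module]
    exact lintegral_comp_add_smul_le hf _ (by linarith)

theorem lintegral_segment_swap (hf : Measurable f) :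
    ∫⁻ x in B, ∫⁻ y in B, (∫⁻ h in Icc (0 : ℝ) 1, f (x + h • (y - x))) ∂μ ∂μ =
      ∫⁻ h in Icc (0 : ℝ) 1, ∫⁻ x in B, ∫⁻ y in B, f (x + h • (y - x)) ∂μ ∂μ := by
  have hinner (x : E) : ∫⁻ y in B, (∫⁻ h in Icc (0 : ℝ) 1, f (x + h • (y - x))) ∂μ =
      ∫⁻ h in Icc (0 : ℝ) 1, ∫⁻ y in B, f (x + h • (y - x)) ∂μ := by
    apply lintegral_lintegral_swap
    exact (hf.comp (by fun_prop)).aemeasurable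
  simp_rw [hinner]
  apply lintegral_lintegral_swap
  exact (Measurable.lintegral_prod_right'
    (f := fun a : (E × ℝ) × E => f (a.1.1 + a.1.2 • (a.2 - a.1.1)))
    (hf.comp (by fun_prop))).aemeasurable

theorem lintegral_lintegral_enorm_sub_rpow_le_of_convex (hw : ContDiff ℝ 1 w) (hr : 1 ≤ r)
    (hB : Convex ℝ B) (hBm : MeasurableSet B) {D : ℝ≥0} (hD : ∀ x ∈ B, ∀ y ∈ B, ‖y - x‖ₑ ≤ D) :
    ∫⁻ x in B, ∫⁻ y in B, ‖w x - w y‖ₑ ^ r ∂μ ∂μ ≤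
      D ^ r * (2 ^ Module.finrank ℝ E * μ B * ∫⁻ x in B, ‖fderiv ℝ w x‖ₑ ^ r ∂μ) := by
  have hr0 : 0 ≤ r := by positivity
  have hDtop : (D : ℝ≥0∞) ^ r ≠ ⊤ := ENNReal.rpow_ne_top_of_nonneg hr0 ENNReal.coe_ne_top
  let f : E → ℝ≥0∞ := B.indicator fun x => ‖fderiv ℝ w x‖ₑ ^ r
  have hf : Measurable f := Measurable.indicator
    ((hw.continuous_fderiv one_ne_zero).enorm.measurable.pow_const r) hBm
  have hsegment : ∀ x ∈ B, ∀ y ∈ B, ‖w x - w y‖ₑ ^ r ≤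
      D ^ r * ∫⁻ h in Icc (0 : ℝ) 1, f (x + h • (y - x)) := by
    intro x hx y hy
    rw [← enorm_neg, neg_sub]
    refine (enorm_sub_rpow_le_lintegral_segment hw hr x y).trans ?_
    refine mul_le_mul' (ENNReal.rpow_le_rpow (hD x hx y hy) hr0)
      (setLIntegral_mono' measurableSet_Icc fun h hh => ?_)
    simp only [f, indicator_of_mem (hB.add_smul_sub_mem hx hy hh), le_refl]
  calc ∫⁻ x in B, ∫⁻ y in B, ‖w x - w y‖ₑ ^ r ∂μ ∂μ
      ≤ ∫⁻ x in B, ∫⁻ y in B, (D ^ r * ∫⁻ h in Icc (0 : ℝ) 1, f (x + h • (y - x))) ∂μ ∂μ :=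
        setLIntegral_mono' hBm fun x hx => setLIntegral_mono' hBm fun y hy => hsegment x hx y hy
    _ = D ^ r * ∫⁻ h in Icc (0 : ℝ) 1, ∫⁻ x in B, ∫⁻ y in B, f (x + h • (y - x)) ∂μ ∂μ := by
        simp_rw [lintegral_const_mul' _ _ hDtop]
        rw [lintegral_segment_swap hf]
    _ ≤ D ^ r * ∫⁻ _ in Icc (0 : ℝ) 1, 2 ^ Module.finrank ℝ E * μ B * ∫⁻ x, f x ∂μ := by
        refine mul_le_mul' le_rfl (lintegral_mono fun h => ?_)
        exact setLIntegral_setLIntegral_segment_le hf h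
    _ = _ := by simp [f, lintegral_indicator hBm]

theorem lintegral_lintegral_enorm_sub_rpow_le_of_ball (hw : ContDiff ℝ 1 w) (hr : 1 ≤ r)
    (x₀ : E) (R : ℝ) :
    ∫⁻ x in ball x₀ R, ∫⁻ y in ball x₀ R, ‖w x - w y‖ₑ ^ r ∂μ ∂μ ≤
      ENNReal.ofReal (2 * R) ^ r * (2 ^ Module.finrank ℝ E * μ (ball x₀ R) *
        ∫⁻ x in ball x₀ R, ‖fderiv ℝ w x‖ₑ ^ r ∂μ) := by
  refine lintegral_lintegral_enorm_sub_rpow_le_of_convex hw hr (convex_ball x₀ R)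
    measurableSet_ball fun x hx y hy => ?_
  rw [← ofReal_norm, ← dist_eq_norm]
  apply ENNReal.ofReal_le_ofReal
  linarith [dist_triangle_right y x x₀, mem_ball.1 hx, mem_ball.1 hy]

end ConvexPoincare

/-! ### Averaging weights -/

theorem hasFDerivAt_dilate_translate {E : Type*} [NormedAddCommGroup E] [NormedSpace ℝ E]
    {η : E → ℝ} (hη : ContDiff ℝ 1 η) (c R : ℝ) (x₀ x : E) :
    HasFDerivAt (fun y => c * η (R⁻¹ • (y - x₀))) (c • R⁻¹ • fderiv ℝ η (R⁻¹ • (x - x₀))) x := by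
  have hinner : HasFDerivAt (fun y : E => R⁻¹ • (y - x₀)) (R⁻¹ • ContinuousLinearMap.id ℝ E) x :=
    ((hasFDerivAt_id x).sub_const x₀).const_smul R⁻¹
  have hcomp := (hη.differentiable one_ne_zero (R⁻¹ • (x - x₀))).hasFDerivAt.comp x hinner
  exact (hcomp.const_mul c).congr_fderiv (by ext y; simp)

section MeanWeight

variable {E : Type*} [NormedAddCommGroup E] [NormedSpace ℝ E] [MeasurableSpace E]

/-- A `C¹` averaging weight of mean one adapted to the ball `B_R(x₀)`, with scale-invariant bounds
on its size and gradient; slice means of solutions are taken against it. Its support is required to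
lie in the half ball so that the same weight serves all slightly smaller balls. -/
structure IsMeanWeight (μ : Measure E) (η : E → ℝ) (x₀ : E) (R : ℝ) (M : ℝ≥0) : Prop where
  contDiff : ContDiff ℝ 1 η
  tsupport_subset : tsupport η ⊆ ball x₀ (R / 2)
  nonneg : 0 ≤ η
  integral_eq_one : ∫ x, η x ∂μ = 1
  ofReal_le : ∀ x, ENNReal.ofReal (η x) ≤ M / μ (ball x₀ R)
  enorm_fderiv_le : ∀ x, ‖fderiv ℝ η x‖ₑ ≤ M / (ENNReal.ofReal R * μ (ball x₀ R))

variable [FiniteDimensional ℝ E] {μ : Measure E} {η : E → ℝ} {x₀ : E} {R : ℝ} {M : ℝ≥0}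

theorem IsMeanWeight.hasCompactSupport (h : IsMeanWeight μ η x₀ R M) : HasCompactSupport η :=
  isCompact_of_isClosed_isBounded (isClosed_tsupport η) (isBounded_ball.subset h.tsupport_subset)

variable [BorelSpace E] [μ.IsAddHaarMeasure]

theorem exists_isMeanWeight_unit_ball : ∃ (M : ℝ≥0) (η : E → ℝ), IsMeanWeight μ η 0 1 M := by
  let k : ContDiffBump (0 : E) := ⟨1 / 4, 1 / 3, by norm_num, by norm_num⟩
  have hsmooth : ContDiff ℝ 1 (k.normed μ) := k.contDiff_normed
  have hsupp : HasCompactSupport (k.normed μ) := k.hasCompactSupport_normed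
  obtain ⟨C, hC⟩ := hsupp.exists_bound_of_continuous hsmooth.continuous
  obtain ⟨C', hC'⟩ := (hsupp.fderiv (𝕜 := ℝ)).exists_bound_of_continuous
    (hsmooth.continuous_fderiv one_ne_zero)
  have hvol0 : μ (ball (0 : E) 1) ≠ 0 := (measure_ball_pos _ _ one_pos).ne'
  have hvoltop : μ (ball (0 : E) 1) ≠ ⊤ := measure_ball_lt_top.ne
  let M : ℝ≥0 := max C.toNNReal C'.toNNReal * (μ (ball (0 : E) 1)).toNNReal
  have hM : (M : ℝ≥0∞) / μ (ball 0 1) = max (ENNReal.ofReal C) (ENNReal.ofReal C') := by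
    simp only [M, ENNReal.coe_mul, ENNReal.coe_toNNReal hvoltop, ENNReal.coe_max]
    rw [ENNReal.mul_div_cancel_right hvol0 hvoltop]
    rfl
  refine ⟨M, k.normed μ, hsmooth, ?_, fun x => k.nonneg_normed x, k.integral_normed, ?_, ?_⟩
  · rw [k.tsupport_normed_eq]
    exact closedBall_subset_ball (by norm_num)
  · intro x
    rw [hM]
    exact (ENNReal.ofReal_le_ofReal ((le_abs_self _).trans (hC x))).trans (le_max_left _ _)
  · intro x
    rw [ENNReal.ofReal_one, one_mul, hM, ← ofReal_norm]
    exact (ENNReal.ofReal_le_ofReal (hC' x)).trans (le_max_right _ _)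

theorem measure_ball_eq_pow_mul (x₀ : E) (hR : 0 < R) :
    μ (ball x₀ R) = ENNReal.ofReal R ^ Module.finrank ℝ E * μ (ball 0 1) := by
  rw [Measure.addHaar_ball_of_pos μ x₀ hR, ENNReal.ofReal_pow hR.le]

theorem IsMeanWeight.dilate_translate (h : IsMeanWeight μ η 0 1 M) (x₀ : E) (hR : 0 < R) :
    IsMeanWeight μ (fun x => (R ^ Module.finrank ℝ E)⁻¹ * η (R⁻¹ • (x - x₀))) x₀ R M := by
  have hηc := h.contDiff
  have hRd : ENNReal.ofReal (R ^ Module.finrank ℝ E)⁻¹ =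
      (ENNReal.ofReal R ^ Module.finrank ℝ E)⁻¹ := by
    rw [ENNReal.ofReal_inv_of_pos (by positivity), ENNReal.ofReal_pow hR.le]
  have hRd0 : ENNReal.ofReal R ^ Module.finrank ℝ E ≠ 0 := by simp [hR]
  have hRdtop : ENNReal.ofReal R ^ Module.finrank ℝ E ≠ ⊤ := by simp
  refine ⟨by fun_prop, fun x hx => ?_, fun x => ?_, ?_, fun x => ?_, fun x => ?_⟩
  · have hmem : R⁻¹ • (x - x₀) ∈ ball 0 (1 / 2) := h.tsupport_subset
      (tsupport_comp_subset_preimage η (f := fun x => R⁻¹ • (x - x₀)) (by fun_prop)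
        (tsupport_mul_subset_right hx))
    rw [mem_ball_zero_iff, norm_smul, norm_inv, Real.norm_of_nonneg hR.le,
      inv_mul_lt_iff₀ hR] at hmem
    rw [mem_ball, dist_eq_norm]
    linarith
  · exact mul_nonneg (by positivity) (h.nonneg _)
  · rw [integral_const_mul, integral_sub_right_eq_self (fun x => η (R⁻¹ • x)) x₀,
      Measure.integral_comp_inv_smul, h.integral_eq_one]
    simp [abs_of_pos hR, hR.ne']
  · rw [ENNReal.ofReal_mul (by positivity), measure_ball_eq_pow_mul x₀ hR, hRd, div_eq_mul_inv,
      ENNReal.mul_inv (.inl hRd0) (.inl hRdtop), mul_left_comm]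
    gcongr
    exact h.ofReal_le _
  · have hbound := h.enorm_fderiv_le (R⁻¹ • (x - x₀))
    rw [ENNReal.ofReal_one, one_mul, div_eq_mul_inv] at hbound
    rw [(hasFDerivAt_dilate_translate hηc _ R x₀ x).fderiv, enorm_smul, enorm_smul,
      Real.enorm_of_nonneg (by positivity), Real.enorm_of_nonneg (by positivity), hRd,
      measure_ball_eq_pow_mul x₀ hR, div_eq_mul_inv, ENNReal.mul_inv (by simp [hR]) (by simp),
      ENNReal.mul_inv (.inl hRd0) (.inl hRdtop), ENNReal.ofReal_inv_of_pos hR]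
    calc _ ≤ (ENNReal.ofReal R ^ Module.finrank ℝ E)⁻¹ *
          ((ENNReal.ofReal R)⁻¹ * (M * (μ (ball 0 1))⁻¹)) := by gcongr
      _ = _ := by ring

theorem exists_isMeanWeight (μ : Measure E) [μ.IsAddHaarMeasure] :
    ∃ M : ℝ≥0, ∀ (x₀ : E) (R : ℝ), 0 < R → ∃ η : E → ℝ, IsMeanWeight μ η x₀ R M := by
  obtain ⟨M, η, hη⟩ := exists_isMeanWeight_unit_ball (μ := μ)
  exact ⟨M, fun x₀ R hR => ⟨_, hη.dilate_translate x₀ hR⟩⟩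

theorem IsMeanWeight.enorm_sub_integral_mul_rpow_le (h : IsMeanWeight μ η x₀ R M) {B : Set E}
    (hB : ball x₀ (R / 2) ⊆ B) (hBm : MeasurableSet B) {V : E → ℝ}
    (hV : Continuous V) {r : ℝ} (hr : 1 ≤ r) (c : ℝ) :
    ‖c - ∫ ξ, η ξ * V ξ ∂μ‖ₑ ^ r ≤ M / μ (ball x₀ R) * ∫⁻ ξ in B, ‖c - V ξ‖ₑ ^ r ∂μ := by
  have hηc := h.contDiff.continuous
  have hd : Measurable fun ξ => ENNReal.ofReal (η ξ) := hηc.measurable.ennreal_ofReal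
  have hdfin : ∀ᵐ ξ ∂μ, ENNReal.ofReal (η ξ) < ⊤ := by simp
  have hsmul (ξ : E) : (ENNReal.ofReal (η ξ)).toReal • V ξ = η ξ * V ξ := by
    rw [ENNReal.toReal_ofReal (h.nonneg ξ), smul_eq_mul]
  have hint : Integrable V (μ.withDensity fun ξ => ENNReal.ofReal (η ξ)) := by
    rw [integrable_withDensity_iff_integrable_smul' hd hdfin]
    simp_rw [hsmul]
    exact (hηc.mul hV).integrable_of_hasCompactSupport h.hasCompactSupport.mul_right
  have := isProbabilityMeasure_withDensity_ofReal
    (hηc.integrable_of_hasCompactSupport h.hasCompactSupport) h.nonneg h.integral_eq_one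
  have hVm : Measurable fun ξ => ‖c - V ξ‖ₑ ^ r :=
    (Continuous.enorm (by fun_prop)).measurable.pow_const r
  have jensen := enorm_sub_integral_rpow_le hint hr c
  rw [integral_withDensity_eq_integral_toReal_smul hd hdfin,
    lintegral_withDensity_eq_lintegral_mul _ hd hVm] at jensen
  simp_rw [hsmul] at jensen
  rw [← lintegral_const_mul _ hVm, ← lintegral_indicator hBm]
  refine jensen.trans (lintegral_mono fun ξ => ?_)
  by_cases hξ : ξ ∈ B
  · simp only [indicator_of_mem hξ, Pi.mul_apply]
    gcongr
    exact h.ofReal_le ξ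
  · have : η ξ = 0 := image_eq_zero_of_notMem_tsupport fun h' => hξ (hB (h.tsupport_subset h'))
    simp [this]

end MeanWeight

/-! ### Smooth functions whose time derivative is a divergence -/

theorem rpow_add_add_le {r : ℝ} (a b c : ℝ≥0∞) (hr : 1 ≤ r) :
    (a + b + c) ^ r ≤ 3 ^ r * (a ^ r + b ^ r + c ^ r) := by
  have h := ENNReal.rpow_sum_le_const_mul_sum_rpow Finset.univ ![a, b, c] hr
  simp only [Fin.sum_univ_three, Finset.card_univ, Fintype.card_fin, Matrix.cons_val_zero,
    Matrix.cons_val_one, Matrix.cons_val] at h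
  refine h.trans ?_
  gcongr
  norm_num
  exact ENNReal.rpow_le_rpow_of_exponent_le (by norm_num) (by linarith)

theorem lintegral_lintegral_enorm_sub_rpow_le_of_center {X : Type*} [MeasurableSpace X]
    {ν : Measure X} {s : Set X} (hs : MeasurableSet s) {v m : X → ℝ} (hv : Measurable v)
    (hm : Measurable m) {b : ℝ≥0∞} (hb : ∀ z ∈ s, ∀ w ∈ s, ‖m z - m w‖ₑ ≤ b) {r : ℝ}
    (hr : 1 ≤ r) :
    ∫⁻ z in s, ∫⁻ w in s, ‖v z - v w‖ₑ ^ r ∂ν ∂ν ≤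
      3 ^ r * (2 * ν s * (∫⁻ z in s, ‖v z - m z‖ₑ ^ r ∂ν) + ν s ^ 2 * b ^ r) := by
  have hr0 : 0 ≤ r := by positivity
  have h3 : (3 : ℝ≥0∞) ^ r ≠ ⊤ := ENNReal.rpow_ne_top_of_nonneg hr0 (by norm_num)
  have hdev : Measurable fun z => ‖v z - m z‖ₑ ^ r := (hv.sub hm).enorm.pow_const r
  have hpoint : ∀ z ∈ s, ∀ w ∈ s, ‖v z - v w‖ₑ ^ r ≤
      3 ^ r * (‖v z - m z‖ₑ ^ r + b ^ r + ‖v w - m w‖ₑ ^ r) := by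
    intro z hz w hw
    refine le_trans (ENNReal.rpow_le_rpow ?_ hr0) (rpow_add_add_le _ _ _ hr)
    calc ‖v z - v w‖ₑ = ‖(v z - m z) + (m z - m w) + -(v w - m w)‖ₑ := by congr 1; ring
      _ ≤ ‖v z - m z‖ₑ + ‖m z - m w‖ₑ + ‖-(v w - m w)‖ₑ :=
          (enorm_add_le _ _).trans (add_le_add_left (enorm_add_le _ _) _)
      _ ≤ _ := by
          rw [enorm_neg]
          gcongr
          exact hb z hz w hw
  have hinner (z : X) :
      ∫⁻ w in s, 3 ^ r * (‖v z - m z‖ₑ ^ r + b ^ r + ‖v w - m w‖ₑ ^ r) ∂ν =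
        3 ^ r * (‖v z - m z‖ₑ ^ r * ν s + (b ^ r * ν s + ∫⁻ w in s, ‖v w - m w‖ₑ ^ r ∂ν)) := by
    rw [lintegral_const_mul' _ _ h3, lintegral_add_left measurable_const, setLIntegral_const]
    ring
  refine (setLIntegral_mono' hs fun z hz => setLIntegral_mono' hs (hpoint z hz)).trans_eq ?_
  simp_rw [hinner]
  rw [lintegral_const_mul' _ _ h3, lintegral_add_left (hdev.mul_const _), setLIntegral_const,
    lintegral_mul_const _ hdev]
  ring

theorem setLIntegral_prod_eq_lintegral_lintegral_swap {X Y : Type*} [MeasurableSpace X]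
    [MeasurableSpace Y] {μ : Measure X} {ν : Measure Y} [SFinite μ] [SFinite ν]
    {f : X × Y → ℝ≥0∞} (hf : Measurable f) (s : Set X) (t : Set Y) :
    ∫⁻ z in s ×ˢ t, f z ∂(μ.prod ν) = ∫⁻ y in t, ∫⁻ x in s, f (x, y) ∂μ ∂ν := by
  rw [← Measure.prod_restrict, lintegral_prod_symm _ hf.aemeasurable]

section SmoothCylinder

variable {E : Type*} [NormedAddCommGroup E] [NormedSpace ℝ E] {V : E × ℝ → ℝ}

theorem fderiv_slice_space (hV : ContDiff ℝ 1 V) (z : E × ℝ) :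
    fderiv ℝ (fun y => V (y, z.2)) z.1 =
      (fderiv ℝ V z).comp (ContinuousLinearMap.inl ℝ E ℝ) :=
  ((hV.differentiable one_ne_zero z).hasFDerivAt.comp z.1 (hasFDerivAt_prodMk_left z.1 z.2)).fderiv

theorem hasDerivAt_slice_time (hV : ContDiff ℝ 1 V) (x : E) (t : ℝ) :
    HasDerivAt (fun s => V (x, s)) (fderiv ℝ V (x, t) (0, 1)) t :=
  (hV.differentiable one_ne_zero (x, t)).hasFDerivAt.comp_hasDerivAt t
    ((hasDerivAt_const t x).prodMk (hasDerivAt_id t))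

theorem continuous_fderiv_slice_space (hV : ContDiff ℝ 1 V) :
    Continuous fun z : E × ℝ => fderiv ℝ (fun y => V (y, z.2)) z.1 := by
  simp_rw [fderiv_slice_space hV]
  exact (hV.continuous_fderiv one_ne_zero).clm_comp continuous_const

variable [MeasurableSpace E] [BorelSpace E] [FiniteDimensional ℝ E] {μ : Measure E}
  [μ.IsAddHaarMeasure] {η : E → ℝ}

theorem integrable_mul_prod_Ioc {f : E × ℝ → ℝ} (hη : Continuous η) (hηs : HasCompactSupport η)
    (hf : Continuous f) (t₁ t₂ : ℝ) :
    Integrable (fun z : E × ℝ => η z.1 * f z) (μ.prod (volume.restrict (Ioc t₁ t₂))) := by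
  have hcompact : IntegrableOn (fun z : E × ℝ => η z.1 * f z) (tsupport η ×ˢ Icc t₁ t₂)
      (μ.prod volume) :=
    Continuous.continuousOn (by fun_prop) |>.integrableOn_compact (hηs.isCompact.prod isCompact_Icc)
  have hstrip : IntegrableOn (fun z : E × ℝ => η z.1 * f z) (univ ×ˢ Ioc t₁ t₂)
      (μ.prod volume) := by
    apply hcompact.of_forall_sdiff_eq_zero (MeasurableSet.univ.prod measurableSet_Ioc)
    rintro ⟨x, t⟩ ⟨⟨-, ht⟩, hxt⟩
    have hx : x ∉ tsupport η := fun hx => hxt ⟨hx, Ioc_subset_Icc_self ht⟩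
    simp [image_eq_zero_of_notMem_tsupport hx]
  rwa [IntegrableOn, ← Measure.prod_restrict, Measure.restrict_univ] at hstrip

theorem integral_mul_slice_sub (hη : Continuous η) (hηs : HasCompactSupport η)
    (hV : ContDiff ℝ 1 V) {t₁ t₂ : ℝ} (h12 : t₁ ≤ t₂) :
    (∫ x, η x * V (x, t₂) ∂μ) - ∫ x, η x * V (x, t₁) ∂μ =
      ∫ t in Ioc t₁ t₂, ∫ x, η x * fderiv ℝ V (x, t) (0, 1) ∂μ := by
  have hVc := hV.continuous
  have hDV : Continuous fun z => fderiv ℝ V z ((0 : E), (1 : ℝ)) :=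
    (hV.continuous_fderiv one_ne_zero).clm_apply continuous_const
  have hint (t : ℝ) : Integrable (fun x => η x * V (x, t)) μ :=
    Continuous.integrable_of_hasCompactSupport (by fun_prop) hηs.mul_right
  rw [← integral_sub (hint _) (hint _),
    ← integral_integral_swap (integrable_mul_prod_Ioc hη hηs hDV t₁ t₂)]
  refine integral_congr_ae (Eventually.of_forall fun x => ?_)
  simp only
  rw [integral_const_mul, ← mul_sub, ← intervalIntegral.integral_of_le h12,
    intervalIntegral.integral_eq_sub_of_hasDerivAt fun t _ => hasDerivAt_slice_time hV x t]
  exact (hDV.comp (by fun_prop : Continuous fun t : ℝ => (x, t))).intervalIntegrable _ _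

theorem integral_mul_sum_fderiv {ι : Type*} [Fintype ι] {e : ι → E} {g : ι → E → ℝ}
    (hη : ContDiff ℝ 1 η) (hηs : HasCompactSupport η) (hg : ∀ j, ContDiff ℝ 1 (g j)) :
    ∫ x, η x * ∑ j, fderiv ℝ (g j) x (e j) ∂μ = -∫ x, ∑ j, fderiv ℝ η x (e j) * g j x ∂μ := by
  have hηc := hη.continuous
  have hgc (j : ι) := (hg j).continuous
  have hDη (j : ι) : Continuous fun x => fderiv ℝ η x (e j) :=
    (hη.continuous_fderiv one_ne_zero).clm_apply continuous_const
  have hDg (j : ι) : Continuous fun x => fderiv ℝ (g j) x (e j) :=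
    ((hg j).continuous_fderiv one_ne_zero).clm_apply continuous_const
  have hint_dη (j : ι) : Integrable (fun x => fderiv ℝ η x (e j) * g j x) μ :=
    ((hDη j).mul (hgc j)).integrable_of_hasCompactSupport
      (hηs.fderiv_apply (𝕜 := ℝ) (e j)).mul_right
  have hint_dg (j : ι) : Integrable (fun x => η x * fderiv ℝ (g j) x (e j)) μ :=
    (hηc.mul (hDg j)).integrable_of_hasCompactSupport hηs.mul_right
  simp_rw [Finset.mul_sum]
  rw [integral_finsetSum _ fun j _ => hint_dg j, integral_finsetSum _ fun j _ => hint_dη j,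
    ← Finset.sum_neg_distrib]
  exact Finset.sum_congr rfl fun j _ => integral_mul_fderiv_eq_neg_fderiv_mul_of_integrable
    (hint_dη j) (hint_dg j) ((hηc.mul (hgc j)).integrable_of_hasCompactSupport hηs.mul_right)
    (fun x _ => hη.differentiable one_ne_zero x) (fun x _ => (hg j).differentiable one_ne_zero x)

variable {ι : Type*} [Fintype ι] {e : ι → E} {G : ι → E × ℝ → ℝ} {x₀ : E} {R r : ℝ} {M : ℝ≥0}
  {B : Set E} {I : Set ℝ}

theorem IsMeanWeight.enorm_integral_mul_divergence_le (h : IsMeanWeight μ η x₀ R M)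
    (hB : ball x₀ (R / 2) ⊆ B) (hBm : MeasurableSet B) {g : ι → E → ℝ}
    (hg : ∀ j, ContDiff ℝ 1 (g j)) (he : ∀ j, ‖e j‖ₑ ≤ 1) :
    ‖∫ x, η x * ∑ j, fderiv ℝ (g j) x (e j) ∂μ‖ₑ ≤
      M / (ENNReal.ofReal R * μ (ball x₀ R)) * ∫⁻ x in B, ∑ j, ‖g j x‖ₑ ∂μ := by
  have hgm : Measurable fun x => ∑ j, ‖g j x‖ₑ :=
    Finset.measurable_sum _ fun j _ => (hg j).continuous.enorm.measurable
  rw [integral_mul_sum_fderiv h.contDiff h.hasCompactSupport hg, enorm_neg,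
    ← lintegral_const_mul _ hgm, ← lintegral_indicator hBm]
  refine (enorm_integral_le_lintegral_enorm _).trans (lintegral_mono fun x => ?_)
  by_cases hx : x ∈ B
  · simp only [indicator_of_mem hx, Finset.mul_sum]
    refine (enorm_sum_le _ _).trans (Finset.sum_le_sum fun j _ => ?_)
    rw [enorm_mul]
    gcongr
    calc ‖fderiv ℝ η x (e j)‖ₑ ≤ ‖fderiv ℝ η x‖ₑ * ‖e j‖ₑ := ContinuousLinearMap.le_opENorm _ _
      _ ≤ M / (ENNReal.ofReal R * μ (ball x₀ R)) * 1 := mul_le_mul' (h.enorm_fderiv_le x) (he j)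
      _ = _ := mul_one _
  · have hDη : fderiv ℝ η x = 0 :=
      fderiv_of_notMem_tsupport ℝ fun hx' => hx (hB (h.tsupport_subset hx'))
    simp [hDη]

theorem IsMeanWeight.enorm_integral_mul_slice_sub_le (h : IsMeanWeight μ η x₀ R M)
    (hB : ball x₀ (R / 2) ⊆ B) (hBm : MeasurableSet B) (hI : OrdConnected I)
    (hV : ContDiff ℝ 1 V) (hG : ∀ j, ContDiff ℝ 1 (G j)) (he : ∀ j, ‖e j‖ₑ ≤ 1)
    (hdiv : ∀ x ∈ B, ∀ t ∈ I, fderiv ℝ V (x, t) (0, 1) = ∑ j, fderiv ℝ (G j) (x, t) (e j, 0))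
    {t₁ t₂ : ℝ} (ht₁ : t₁ ∈ I) (ht₂ : t₂ ∈ I) :
    ‖(∫ x, η x * V (x, t₁) ∂μ) - ∫ x, η x * V (x, t₂) ∂μ‖ₑ ≤
      ∫⁻ t in I, M / (ENNReal.ofReal R * μ (ball x₀ R)) *
        ∫⁻ x in B, ∑ j, ‖G j (x, t)‖ₑ ∂μ := by
  wlog h12 : t₂ ≤ t₁ generalizing t₁ t₂
  · rw [← enorm_neg, neg_sub]
    exact this ht₂ ht₁ (le_of_not_ge h12)
  have hslice : ∀ t ∈ I, ‖∫ x, η x * fderiv ℝ V (x, t) (0, 1) ∂μ‖ₑ ≤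
      M / (ENNReal.ofReal R * μ (ball x₀ R)) * ∫⁻ x in B, ∑ j, ‖G j (x, t)‖ₑ ∂μ := by
    intro t ht
    have hdivη (x : E) : η x * fderiv ℝ V (x, t) (0, 1) =
        η x * ∑ j, fderiv ℝ (fun y => G j (y, t)) x (e j) := by
      by_cases hx : x ∈ tsupport η
      · rw [hdiv x (hB (h.tsupport_subset hx)) t ht]
        simp [fderiv_slice_space (hG _) (x, t)]
      · simp [image_eq_zero_of_notMem_tsupport hx]
    simp_rw [hdivη]
    exact h.enorm_integral_mul_divergence_le hB hBm (fun j => (hG j).comp (by fun_prop)) he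
  have hIoc : Ioc t₂ t₁ ⊆ I := Ioc_subset_Icc_self.trans (hI.out ht₂ ht₁)
  rw [integral_mul_slice_sub h.contDiff.continuous h.hasCompactSupport hV h12]
  calc _ ≤ ∫⁻ t in Ioc t₂ t₁, ‖∫ x, η x * fderiv ℝ V (x, t) (0, 1) ∂μ‖ₑ :=
        enorm_integral_le_lintegral_enorm _
    _ ≤ ∫⁻ t in Ioc t₂ t₁, M / (ENNReal.ofReal R * μ (ball x₀ R)) *
          ∫⁻ x in B, ∑ j, ‖G j (x, t)‖ₑ ∂μ :=
        setLIntegral_mono' measurableSet_Ioc fun t ht => hslice t (hIoc ht)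
    _ ≤ _ := lintegral_mono_set hIoc

theorem IsMeanWeight.lintegral_enorm_sub_mean_rpow_le (h : IsMeanWeight μ η x₀ R M) {R' : ℝ}
    (hR' : 0 < R') (hRR' : R / 2 ≤ R') (hR'R : R' ≤ R) {V : E → ℝ} (hV : ContDiff ℝ 1 V)
    (hr : 1 ≤ r) :
    ∫⁻ x in ball x₀ R', ‖V x - ∫ ξ, η ξ * V ξ ∂μ‖ₑ ^ r ∂μ ≤
      M * 2 ^ Module.finrank ℝ E * ENNReal.ofReal (2 * R) ^ r *
        ∫⁻ x in ball x₀ R', ‖fderiv ℝ V x‖ₑ ^ r ∂μ := by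
  have hVc := hV.continuous
  have hvol0 : μ (ball x₀ R) ≠ 0 := (measure_ball_pos _ _ (hR'.trans_le hR'R)).ne'
  have hvoltop : μ (ball x₀ R) ≠ ⊤ := measure_ball_lt_top.ne
  have hball : ball x₀ R' ⊆ ball x₀ R := ball_subset_ball hR'R
  calc ∫⁻ x in ball x₀ R', ‖V x - ∫ ξ, η ξ * V ξ ∂μ‖ₑ ^ r ∂μ
      ≤ ∫⁻ x in ball x₀ R', M / μ (ball x₀ R) * ∫⁻ ξ in ball x₀ R', ‖V x - V ξ‖ₑ ^ r ∂μ ∂μ :=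
        lintegral_mono fun x => h.enorm_sub_integral_mul_rpow_le (ball_subset_ball hRR')
          measurableSet_ball hVc hr (V x)
    _ = M / μ (ball x₀ R) *
          ∫⁻ x in ball x₀ R', ∫⁻ ξ in ball x₀ R', ‖V x - V ξ‖ₑ ^ r ∂μ ∂μ :=
        lintegral_const_mul' _ _ (ENNReal.div_ne_top ENNReal.coe_ne_top hvol0)
    _ ≤ M / μ (ball x₀ R) * (ENNReal.ofReal (2 * R') ^ r * (2 ^ Module.finrank ℝ E *
          μ (ball x₀ R') * ∫⁻ x in ball x₀ R', ‖fderiv ℝ V x‖ₑ ^ r ∂μ)) := by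
        gcongr
        exact lintegral_lintegral_enorm_sub_rpow_le_of_ball hV hr x₀ R'
    _ ≤ M / μ (ball x₀ R) * (ENNReal.ofReal (2 * R) ^ r * (2 ^ Module.finrank ℝ E *
          μ (ball x₀ R) * ∫⁻ x in ball x₀ R', ‖fderiv ℝ V x‖ₑ ^ r ∂μ)) := by gcongr
    _ = M / μ (ball x₀ R) * μ (ball x₀ R) * 2 ^ Module.finrank ℝ E * ENNReal.ofReal (2 * R) ^ r *
          ∫⁻ x in ball x₀ R', ‖fderiv ℝ V x‖ₑ ^ r ∂μ := by ring
    _ = _ := by rw [ENNReal.div_mul_cancel hvol0 hvoltop]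

theorem IsMeanWeight.lintegral_lintegral_enorm_sub_rpow_le (h : IsMeanWeight μ η x₀ R M) {R' : ℝ}
    (hR' : 0 < R') (hRR' : R / 2 ≤ R') (hR'R : R' ≤ R) (hI : OrdConnected I)
    (hIm : MeasurableSet I) (hV : ContDiff ℝ 1 V) (hG : ∀ j, ContDiff ℝ 1 (G j))
    (he : ∀ j, ‖e j‖ₑ ≤ 1) (hdiv : ∀ z ∈ ball x₀ R' ×ˢ I,
      fderiv ℝ V z (0, 1) = ∑ j, fderiv ℝ (G j) z (e j, 0)) (hr : 1 ≤ r) :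
    ∫⁻ z in ball x₀ R' ×ˢ I, ∫⁻ w in ball x₀ R' ×ˢ I, ‖V z - V w‖ₑ ^ r
        ∂(μ.prod volume) ∂(μ.prod volume) ≤
      3 ^ r * (2 * (μ.prod volume) (ball x₀ R' ×ˢ I) *
        (M * 2 ^ Module.finrank ℝ E * ENNReal.ofReal (2 * R) ^ r *
          ∫⁻ z in ball x₀ R' ×ˢ I, ‖fderiv ℝ (fun y => V (y, z.2)) z.1‖ₑ ^ r ∂(μ.prod volume)) +
        (μ.prod volume) (ball x₀ R' ×ˢ I) ^ 2 * (M / (ENNReal.ofReal R * μ (ball x₀ R)) *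
          ∫⁻ z in ball x₀ R' ×ˢ I, ∑ j, ‖G j z‖ₑ ∂(μ.prod volume)) ^ r) := by
  have hVc := hV.continuous
  have hηc := h.contDiff.continuous
  let m : ℝ → ℝ := fun t => ∫ x, η x * V (x, t) ∂μ
  have hm : Measurable fun z : E × ℝ => m z.2 := by
    have : StronglyMeasurable fun z : E × ℝ => η z.1 * V z :=
      Continuous.stronglyMeasurable (by fun_prop)
    exact (StronglyMeasurable.integral_prod_left' this).measurable.comp measurable_snd
  have hGm : Measurable fun z => ∑ j, ‖G j z‖ₑ :=
    Finset.measurable_sum _ fun j _ => (hG j).continuous.enorm.measurable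
  have htime : ∀ z ∈ ball x₀ R' ×ˢ I, ∀ w ∈ ball x₀ R' ×ˢ I, ‖m z.2 - m w.2‖ₑ ≤
      M / (ENNReal.ofReal R * μ (ball x₀ R)) *
        ∫⁻ z in ball x₀ R' ×ˢ I, ∑ j, ‖G j z‖ₑ ∂(μ.prod volume) := by
    intro z hz w hw
    rw [setLIntegral_prod_eq_lintegral_lintegral_swap hGm,
      ← lintegral_const_mul _ hGm.lintegral_prod_left']
    exact h.enorm_integral_mul_slice_sub_le (ball_subset_ball hRR') measurableSet_ball hI hV hG he
      (fun x hx t ht => hdiv (x, t) ⟨hx, ht⟩) hz.2 hw.2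
  have hspace : ∫⁻ z in ball x₀ R' ×ˢ I, ‖V z - m z.2‖ₑ ^ r ∂(μ.prod volume) ≤
      M * 2 ^ Module.finrank ℝ E * ENNReal.ofReal (2 * R) ^ r *
        ∫⁻ z in ball x₀ R' ×ˢ I, ‖fderiv ℝ (fun y => V (y, z.2)) z.1‖ₑ ^ r ∂(μ.prod volume) := by
    have hDm := (continuous_fderiv_slice_space hV).enorm.measurable.pow_const r
    have hdev : Measurable fun z : E × ℝ => ‖V z - m z.2‖ₑ ^ r :=
      (hVc.measurable.sub hm).enorm.pow_const r
    rw [setLIntegral_prod_eq_lintegral_lintegral_swap hdev,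
      setLIntegral_prod_eq_lintegral_lintegral_swap hDm,
      ← lintegral_const_mul _ hDm.lintegral_prod_left']
    exact lintegral_mono fun t => h.lintegral_enorm_sub_mean_rpow_le hR' hRR' hR'R
      (hV.comp (by fun_prop)) hr
  refine (lintegral_lintegral_enorm_sub_rpow_le_of_center (measurableSet_ball.prod hIm)
    hVc.measurable hm htime hr).trans ?_
  gcongr

end SmoothCylinder

/-! ### Weak derivatives and mollification -/

section Mollification

variable {E : Type*} [NormedAddCommGroup E] [NormedSpace ℝ E] {Q Q' : Set E} {ψ v g : E → ℝ}

/-- `ψ` belongs to the space `C₀^∞(Q)` of test functions on `Q`. -/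
structure IsTestFunctionOn (ψ : E → ℝ) (Q : Set E) : Prop where
  contDiff : ContDiff ℝ (⊤ : ℕ∞) ψ
  hasCompactSupport : HasCompactSupport ψ
  tsupport_subset : tsupport ψ ⊆ Q

theorem IsTestFunctionOn.mono (hψ : IsTestFunctionOn ψ Q) (h : Q ⊆ Q') : IsTestFunctionOn ψ Q' :=
  ⟨hψ.contDiff, hψ.hasCompactSupport, hψ.tsupport_subset.trans h⟩

theorem IsTestFunctionOn.eq_zero_of_notMem (hψ : IsTestFunctionOn ψ Q) {z : E} (hz : z ∉ Q) :
    ψ z = 0 :=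
  image_eq_zero_of_notMem_tsupport fun h => hz (hψ.tsupport_subset h)

theorem IsTestFunctionOn.fderiv_eq_zero_of_notMem (hψ : IsTestFunctionOn ψ Q) {z : E}
    (hz : z ∉ Q) : fderiv ℝ ψ z = 0 :=
  fderiv_of_notMem_tsupport ℝ fun h => hz (hψ.tsupport_subset h)

theorem IsTestFunctionOn.continuous_fderiv_apply (hψ : IsTestFunctionOn ψ Q) (e : E) :
    Continuous fun z => fderiv ℝ ψ z e :=
  (hψ.contDiff.continuous_fderiv (by simp)).clm_apply continuous_const

variable [MeasurableSpace E] {μ : Measure E} {ι : Type*} [Fintype ι]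

/-- `g` is the weak derivative of `v` in direction `e` on `Q`. The integrals extend over the whole
space, but only the values of `v` and `g` on `Q` matter. -/
def HasWeakDerivOn (μ : Measure E) (Q : Set E) (v g : E → ℝ) (e : E) : Prop :=
  ∀ ψ, IsTestFunctionOn ψ Q → ∫ z, v z * fderiv ℝ ψ z e ∂μ = -∫ z, g z * ψ z ∂μ

/-- The weak form of the conservation law `∂_{e₀} v = ∑ⱼ ∂_{eⱼ} Gⱼ` on `Q`. -/
def HasWeakDivergenceOn (μ : Measure E) (Q : Set E) (v : E → ℝ) (e₀ : E) (G : ι → E → ℝ)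
    (e : ι → E) : Prop :=
  ∀ ψ, IsTestFunctionOn ψ Q →
    ∫ z, v z * fderiv ℝ ψ z e₀ ∂μ = ∫ z, ∑ j, G j z * fderiv ℝ ψ z (e j) ∂μ

theorem HasWeakDerivOn.mono {e : E} (h : HasWeakDerivOn μ Q' v g e) (hQ : Q ⊆ Q') :
    HasWeakDerivOn μ Q v g e :=
  fun ψ hψ => h ψ (hψ.mono hQ)

theorem HasWeakDivergenceOn.mono {e₀ : E} {G : ι → E → ℝ} {e : ι → E}
    (h : HasWeakDivergenceOn μ Q' v e₀ G e) (hQ : Q ⊆ Q') : HasWeakDivergenceOn μ Q v e₀ G e :=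
  fun ψ hψ => h ψ (hψ.mono hQ)

theorem HasWeakDerivOn.indicator {e : E} (h : HasWeakDerivOn μ Q v g e) :
    HasWeakDerivOn μ Q (Q.indicator v) (Q.indicator g) e := by
  intro ψ hψ
  convert h ψ hψ using 2
  · ext z
    by_cases hz : z ∈ Q <;> simp [hz, hψ.fderiv_eq_zero_of_notMem]
  · congr 1 with z
    by_cases hz : z ∈ Q <;> simp [hz, hψ.eq_zero_of_notMem]

theorem HasWeakDivergenceOn.indicator {e₀ : E} {G : ι → E → ℝ} {e : ι → E}
    (h : HasWeakDivergenceOn μ Q v e₀ G e) :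
    HasWeakDivergenceOn μ Q (Q.indicator v) e₀ (fun j => Q.indicator (G j)) e := by
  intro ψ hψ
  convert h ψ hψ using 2
  · ext z
    by_cases hz : z ∈ Q <;> simp [hz, hψ.fderiv_eq_zero_of_notMem]
  · ext z
    by_cases hz : z ∈ Q <;> simp [hz, hψ.fderiv_eq_zero_of_notMem]

variable [FiniteDimensional ℝ E] [BorelSpace E] {k : ContDiffBump (0 : E)}

/-- The mollification of `f` by the normalised bump `k`. -/
def mollify (μ : Measure E) (k : ContDiffBump (0 : E)) (f : E → ℝ) : E → ℝ :=
  convolution (k.normed μ) f (ContinuousLinearMap.lsmul ℝ ℝ) μ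

theorem enorm_mollify_le (hg : Measurable g) (z : E) :
    ‖mollify μ k g z‖ₑ ≤
      ∫⁻ ζ, ‖g (z - ζ)‖ₑ ∂(μ.withDensity fun ζ => ENNReal.ofReal (k.normed μ ζ)) := by
  have hgz : Measurable fun ζ => ‖g (z - ζ)‖ₑ := (hg.comp (by fun_prop)).enorm
  rw [lintegral_withDensity_eq_lintegral_mul _
    k.continuous_normed.measurable.ennreal_ofReal hgz, mollify, convolution_lsmul]
  refine (enorm_integral_le_lintegral_enorm _).trans (lintegral_mono fun ζ => ?_)
  rw [Pi.mul_apply, smul_eq_mul, enorm_mul, Real.enorm_of_nonneg (k.nonneg_normed _)]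

variable [μ.IsAddHaarMeasure]

theorem contDiff_mollify (hv : LocallyIntegrable v μ) : ContDiff ℝ 1 (mollify μ k v) :=
  k.hasCompactSupport_normed.contDiff_convolution_left _ k.contDiff_normed hv

theorem isTestFunctionOn_normed_sub (z : E) :
    IsTestFunctionOn (fun ζ => k.normed μ (z - ζ)) (closedBall z k.rOut) := by
  have hsupp : tsupport (fun ζ => k.normed μ (z - ζ)) ⊆ closedBall z k.rOut := by
    refine closure_minimal (fun ζ hζ => ?_) isClosed_closedBall
    have hmem : z - ζ ∈ tsupport (k.normed μ) := subset_tsupport _ hζ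
    rwa [k.tsupport_normed_eq, mem_closedBall_zero_iff, norm_sub_rev, ← dist_eq_norm,
      ← mem_closedBall] at hmem
  exact ⟨k.contDiff_normed.comp (by fun_prop), HasCompactSupport.of_support_subset_isCompact
    (isCompact_closedBall z k.rOut) ((subset_tsupport _).trans hsupp), hsupp⟩

theorem fderiv_mollify_apply (hv : LocallyIntegrable v μ) (z e : E) :
    fderiv ℝ (mollify μ k v) z e =
      -∫ ζ, v ζ * fderiv ℝ (fun ζ => k.normed μ (z - ζ)) ζ e ∂μ := by
  have hk : ContDiff ℝ 1 (k.normed μ) := k.contDiff_normed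
  have hks : HasCompactSupport (k.normed μ) := k.hasCompactSupport_normed
  have hint := ((hks.fderiv (𝕜 := ℝ)).convolutionExists_left
    ((ContinuousLinearMap.lsmul ℝ ℝ : ℝ →L[ℝ] ℝ →L[ℝ] ℝ).precompL E)
    (hk.continuous_fderiv one_ne_zero) hv z).integrable_swap
  have hreflect (ζ : E) : HasFDerivAt (fun ζ => k.normed μ (z - ζ))
      ((fderiv ℝ (k.normed μ) (z - ζ)).comp (-ContinuousLinearMap.id ℝ E)) ζ :=
    (hk.differentiable one_ne_zero (z - ζ)).hasFDerivAt.comp ζ ((hasFDerivAt_id ζ).const_sub z)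
  rw [mollify, (hks.hasFDerivAt_convolution_left _ hk hv z).fderiv, convolution_eq_swap,
    ContinuousLinearMap.integral_apply hint, ← integral_neg]
  congr 1 with ζ
  simp [(hreflect ζ).fderiv, ContinuousLinearMap.precompL_apply, mul_comm]

theorem HasWeakDerivOn.fderiv_mollify {e z : E} (h : HasWeakDerivOn μ Q v g e)
    (hv : LocallyIntegrable v μ) (hz : closedBall z k.rOut ⊆ Q) :
    fderiv ℝ (mollify μ k v) z e = mollify μ k g z := by
  rw [fderiv_mollify_apply hv, h _ ((isTestFunctionOn_normed_sub z).mono hz), neg_neg, mollify,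
    convolution_eq_swap]
  simp [mul_comm]

theorem HasWeakDivergenceOn.fderiv_mollify {e₀ z : E} {G : ι → E → ℝ} {e : ι → E}
    (h : HasWeakDivergenceOn μ Q v e₀ G e) (hv : LocallyIntegrable v μ)
    (hG : ∀ j, LocallyIntegrable (G j) μ) (hz : closedBall z k.rOut ⊆ Q) :
    fderiv ℝ (mollify μ k v) z e₀ = ∑ j, fderiv ℝ (mollify μ k (G j)) z (e j) := by
  have htest := isTestFunctionOn_normed_sub (μ := μ) (k := k) z
  have hint (j : ι) : Integrable
      (fun ζ => G j ζ * fderiv ℝ (fun ζ => k.normed μ (z - ζ)) ζ (e j)) μ :=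
    (hG j).integrable_smul_right_of_hasCompactSupport (htest.continuous_fderiv_apply (e j))
      (htest.hasCompactSupport.fderiv_apply (𝕜 := ℝ) (e j))
  simp_rw [fderiv_mollify_apply hv, fderiv_mollify_apply (hG _)]
  rw [h _ (htest.mono hz), integral_finsetSum _ fun j _ => hint j, Finset.sum_neg_distrib]

theorem lintegral_sum_enorm_mollify_rpow_le {g : ι → E → ℝ} (hg : ∀ j, Measurable (g j)) {r : ℝ}
    (hr : 1 ≤ r) :
    ∫⁻ z, (∑ j, ‖mollify μ k (g j) z‖ₑ) ^ r ∂μ ≤ ∫⁻ z, (∑ j, ‖g j z‖ₑ) ^ r ∂μ := by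
  let ν := μ.withDensity fun ζ => ENNReal.ofReal (k.normed μ ζ)
  have hν : IsProbabilityMeasure ν := isProbabilityMeasure_withDensity_ofReal
    k.integrable_normed (fun x => k.nonneg_normed x) k.integral_normed
  have hsum : Measurable fun z => ∑ j, ‖g j z‖ₑ := Finset.measurable_sum _ fun j _ => (hg j).enorm
  have hpoint (z : E) : (∑ j, ‖mollify μ k (g j) z‖ₑ) ^ r ≤
      ∫⁻ ζ, (∑ j, ‖g j (z - ζ)‖ₑ) ^ r ∂ν := by
    have hgz (j : ι) : Measurable fun ζ => ‖g j (z - ζ)‖ₑ := ((hg j).comp (by fun_prop)).enorm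
    refine le_trans (ENNReal.rpow_le_rpow ?_ (by positivity))
      (rpow_lintegral_le_lintegral_rpow (hsum.comp (by fun_prop)).aemeasurable hr)
    rw [lintegral_finsetSum _ fun j _ => hgz j]
    exact Finset.sum_le_sum fun j _ => enorm_mollify_le (hg j) z
  calc _ ≤ ∫⁻ z, ∫⁻ ζ, (∑ j, ‖g j (z - ζ)‖ₑ) ^ r ∂ν ∂μ := lintegral_mono hpoint
    _ = ∫⁻ ζ, ∫⁻ z, (∑ j, ‖g j (z - ζ)‖ₑ) ^ r ∂μ ∂ν := by
        apply lintegral_lintegral_swap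
        exact ((hsum.comp (by fun_prop : Measurable fun a : E × E => a.1 - a.2)).pow_const
          r).aemeasurable
    _ = ∫⁻ _, ∫⁻ z, (∑ j, ‖g j z‖ₑ) ^ r ∂μ ∂ν := by
        congr 1 with ζ
        exact lintegral_sub_right_eq_self (fun z => (∑ j, ‖g j z‖ₑ) ^ r) ζ
    _ = _ := by simp

end Mollification

section Fatou

variable {X : Type*} [MeasurableSpace X] {μ : Measure X} [SFinite μ]

theorem lintegral_lintegral_liminf_le {f : ℕ → X → X → ℝ≥0∞}
    (hf : ∀ k, Measurable (Function.uncurry (f k))) :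
    ∫⁻ x, ∫⁻ y, liminf (fun k => f k x y) atTop ∂μ ∂μ ≤
      liminf (fun k => ∫⁻ x, ∫⁻ y, f k x y ∂μ ∂μ) atTop :=
  (lintegral_mono fun _ => lintegral_liminf_le fun k => (hf k).of_uncurry_left).trans
    (lintegral_liminf_le fun k => (hf k).lintegral_prod_right)

theorem lintegral_lintegral_enorm_sub_rpow_le_of_tendsto {s : Set X} {S : ℕ → Set X}
    {v : X → ℝ} {V : ℕ → X → ℝ} {r : ℝ} {K : ℝ≥0∞} (hs : MeasurableSet s)
    (hS : ∀ k, MeasurableSet (S k)) (hSs : ∀ z ∈ s, ∀ᶠ k in atTop, z ∈ S k)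
    (hV : ∀ k, Measurable (V k)) (hVv : ∀ᵐ z ∂μ, Tendsto (fun k => V k z) atTop (𝓝 (v z)))
    (hK : ∀ k, ∫⁻ z in S k, ∫⁻ w in S k, ‖V k z - V k w‖ₑ ^ r ∂μ ∂μ ≤ K) :
    ∫⁻ z in s, ∫⁻ w in s, ‖v z - v w‖ₑ ^ r ∂μ ∂μ ≤ K := by
  let f (k : ℕ) (z w : X) : ℝ≥0∞ :=
    (S k).indicator (fun z => (S k).indicator (fun w => ‖V k z - V k w‖ₑ ^ r) w) z
  have hfm (k : ℕ) : Measurable (Function.uncurry (f k)) := by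
    have hprod : Function.uncurry (f k) =
        (S k ×ˢ S k).indicator fun a : X × X => ‖V k a.1 - V k a.2‖ₑ ^ r := by
      ext ⟨z, w⟩
      by_cases hz : z ∈ S k <;> by_cases hw : w ∈ S k <;> simp [f, hz, hw]
    have hVk := hV k
    rw [hprod]
    exact Measurable.indicator (by fun_prop) ((hS k).prod (hS k))
  have hfK (k : ℕ) : ∫⁻ z in s, ∫⁻ w in s, f k z w ∂μ ∂μ ≤ K := by
    refine le_trans ?_ (hK k)
    rw [← lintegral_indicator (hS k)]
    refine (setLIntegral_le_lintegral _ _).trans (lintegral_mono fun z => ?_)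
    by_cases hz : z ∈ S k
    · simp only [f, indicator_of_mem hz]
      exact (setLIntegral_le_lintegral _ _).trans_eq (lintegral_indicator (hS k) _)
    · simp [f, hz]
  have hlim : ∀ᵐ z ∂μ.restrict s, ∀ᵐ w ∂μ.restrict s,
      ‖v z - v w‖ₑ ^ r ≤ liminf (fun k => f k z w) atTop := by
    filter_upwards [ae_restrict_of_ae hVv, ae_restrict_mem hs] with z hz hzs
    filter_upwards [ae_restrict_of_ae hVv, ae_restrict_mem hs] with w hw hws
    refine (Tendsto.liminf_eq ?_).ge
    refine (((ENNReal.continuous_rpow_const (y := r)).tendsto _).comp (hz.sub hw).enorm).congr' ?_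
    filter_upwards [hSs z hzs, hSs w hws] with k hzk hwk
    simp [f, hzk, hwk]
  calc _ ≤ ∫⁻ z in s, ∫⁻ w in s, liminf (fun k => f k z w) atTop ∂μ ∂μ :=
        lintegral_mono_ae (hlim.mono fun z hz => lintegral_mono_ae hz)
    _ ≤ liminf (fun k => ∫⁻ z in s, ∫⁻ w in s, f k z w ∂μ ∂μ) atTop :=
        lintegral_lintegral_liminf_le hfm
    _ ≤ K := (liminf_le_liminf (v := fun _ : ℕ => K) (Eventually.of_forall hfK)).trans (by simp)

end Fatou

/-! ### The parabolic Poincaré inequality -/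

instance isAddHaarMeasure_volume_pt (n : ℕ) : (volume : Measure (Pt n)).IsAddHaarMeasure :=
  inferInstanceAs ((volume.prod volume : Measure (Spc n × ℝ)).IsAddHaarMeasure)

theorem measurableSet_Qrs {n : ℕ} (z₀ : Pt n) (R τ : ℝ) : MeasurableSet (Qrs z₀ R τ) :=
  measurableSet_ball.prod measurableSet_Ioo

theorem Qrs_subset_Qrs {n : ℕ} (z₀ : Pt n) {R R' τ τ' : ℝ} (hR : R ≤ R') (hτ : τ ≤ τ') :
    Qrs z₀ R τ ⊆ Qrs z₀ R' τ' :=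
  prod_mono (ball_subset_ball hR) (Ioo_subset_Ioo (by linarith) (by linarith))

theorem closedBall_subset_Qrs {n : ℕ} {z z₀ : Pt n} {R τ ε : ℝ}
    (hz : z ∈ Qrs z₀ (R - ε) (τ - ε)) : closedBall z ε ⊆ Qrs z₀ R τ := by
  obtain ⟨hzx, hzt⟩ := hz
  rw [mem_ball] at hzx
  rw [mem_Ioo] at hzt
  rintro w hw
  rw [mem_closedBall, Prod.dist_eq, max_le_iff, Real.dist_eq, abs_le] at hw
  refine ⟨?_, ?_, ?_⟩
  · rw [mem_ball]
    linarith [dist_triangle w.1 z.1 z₀.1]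
  all_goals linarith

theorem eventually_mem_Qrs_sub {n : ℕ} {z z₀ : Pt n} {R τ : ℝ} {ε : ℕ → ℝ}
    (hε : Tendsto ε atTop (𝓝 0)) (hz : z ∈ Qrs z₀ R τ) :
    ∀ᶠ k in atTop, z ∈ Qrs z₀ (R - ε k) (τ - ε k) := by
  obtain ⟨hzx, hzt⟩ := hz
  rw [mem_ball] at hzx
  rw [mem_Ioo] at hzt
  filter_upwards [hε.eventually_lt_const (sub_pos.2 hzx), hε.eventually_lt_const
    (sub_pos.2 hzt.1), hε.eventually_lt_const (sub_pos.2 hzt.2)] with k hx ht₁ ht₂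
  refine ⟨?_, ?_, ?_⟩
  · rw [mem_ball]
    linarith
  all_goals linarith

theorem volume_Qrs {n : ℕ} (z₀ : Pt n) (R τ : ℝ) :
    volume (Qrs z₀ R τ) = volume (ball z₀.1 R) * ENNReal.ofReal (2 * τ) := by
  rw [Qrs, Measure.volume_eq_prod, Measure.prod_prod, Real.volume_Ioo]
  congr 2
  ring

theorem volume_Qrs_ne_zero {n : ℕ} (z₀ : Pt n) {R τ : ℝ} (hR : 0 < R) (hτ : 0 < τ) :
    volume (Qrs z₀ R τ) ≠ 0 := by
  rw [volume_Qrs]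
  exact mul_ne_zero (measure_ball_pos _ _ hR).ne' (by simpa using hτ)

theorem volume_Qrs_ne_top {n : ℕ} (z₀ : Pt n) (R τ : ℝ) : volume (Qrs z₀ R τ) ≠ ⊤ := by
  rw [volume_Qrs]
  exact ENNReal.mul_ne_top measure_ball_lt_top.ne ENNReal.ofReal_ne_top

theorem enorm_clm_le_sum_enorm_apply_single {n : ℕ} (L : Spc n →L[ℝ] ℝ) :
    ‖L‖ₑ ≤ ∑ j, ‖L (EuclideanSpace.single j 1)‖ₑ := by
  have hnorm : ‖L‖ ≤ ∑ j, ‖L (EuclideanSpace.single j 1)‖ := by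
    refine L.opNorm_le_bound (Finset.sum_nonneg fun j _ => norm_nonneg _) fun v => ?_
    have hv : v = ∑ j, v j • (EuclideanSpace.single j (1 : ℝ) : Spc n) := by
      ext i
      simp [Finset.sum_apply, Pi.single_apply]
    calc ‖L v‖ = ‖∑ j, v j • L (EuclideanSpace.single j (1 : ℝ))‖ := by
          conv_lhs => rw [hv]
          simp [map_sum]
      _ ≤ ∑ j, ‖v j • L (EuclideanSpace.single j (1 : ℝ))‖ := norm_sum_le _ _
      _ ≤ ∑ j, ‖L (EuclideanSpace.single j 1)‖ * ‖v‖ := by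
          refine Finset.sum_le_sum fun j _ => ?_
          rw [norm_smul, mul_comm]
          gcongr
          exact PiLp.norm_apply_le v j
      _ = _ := by rw [Finset.sum_mul]
  rw [← ofReal_norm]
  refine (ENNReal.ofReal_le_ofReal hnorm).trans_eq ?_
  rw [ENNReal.ofReal_sum_of_nonneg fun j _ => norm_nonneg _]
  simp_rw [ofReal_norm]

section ParabolicPoincare

variable {n : ℕ} {z₀ : Pt n} {R τ r : ℝ} {v : Pt n → ℝ} {g G : Fin n → Pt n → ℝ} {M : ℝ≥0}
  {η : Spc n → ℝ}

theorem IsMeanWeight.lintegral_lintegral_enorm_mollify_sub_rpow_le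
    (h : IsMeanWeight volume η z₀.1 R M) {k : ContDiffBump (0 : Pt n)} (hk : k.rOut ≤ R / 2)
    (hv : LocallyIntegrable v) (hg : ∀ j, Measurable (g j)) (hGm : ∀ j, Measurable (G j))
    (hG : ∀ j, LocallyIntegrable (G j))
    (hvg : ∀ j, HasWeakDerivOn volume (Qrs z₀ R τ) v (g j) (EuclideanSpace.single j 1, 0))
    (hvG : HasWeakDivergenceOn volume (Qrs z₀ R τ) v (0, 1) G
      fun j => (EuclideanSpace.single j 1, 0)) (hr : 1 ≤ r) :
    ∫⁻ z in Qrs z₀ (R - k.rOut) (τ - k.rOut), ∫⁻ w in Qrs z₀ (R - k.rOut) (τ - k.rOut),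
        ‖mollify volume k v z - mollify volume k v w‖ₑ ^ r ≤
      3 ^ r * (2 * volume (Qrs z₀ R τ) * (M * 2 ^ n * ENNReal.ofReal (2 * R) ^ r *
          ∫⁻ z, (∑ j, ‖g j z‖ₑ) ^ r) +
        volume (Qrs z₀ R τ) ^ 2 * (M / (ENNReal.ofReal R * volume (ball z₀.1 R)) *
          ∫⁻ z, ∑ j, ‖G j z‖ₑ) ^ r) := by
  have hkpos := k.rOut_pos
  have hsmooth := contDiff_mollify (k := k) hv
  let Q' := Qrs z₀ (R - k.rOut) (τ - k.rOut)
  have hgrad : ∫⁻ z in Q', ‖fderiv ℝ (fun y => mollify volume k v (y, z.2)) z.1‖ₑ ^ r ≤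
      ∫⁻ z, (∑ j, ‖g j z‖ₑ) ^ r := by
    refine le_trans ?_ ((setLIntegral_le_lintegral Q' _).trans
      (lintegral_sum_enorm_mollify_rpow_le (k := k) hg hr))
    refine setLIntegral_mono' (measurableSet_Qrs _ _ _) fun z hz => ?_
    refine ENNReal.rpow_le_rpow ((enorm_clm_le_sum_enorm_apply_single _).trans_eq ?_)
      (by positivity)
    refine Finset.sum_congr rfl fun j _ => ?_
    rw [fderiv_slice_space hsmooth, ← (hvg j).fderiv_mollify hv (closedBall_subset_Qrs hz)]
    rfl
  have hflux : ∫⁻ z in Q', ∑ j, ‖mollify volume k (G j) z‖ₑ ≤ ∫⁻ z, ∑ j, ‖G j z‖ₑ := by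
    have hL1 := lintegral_sum_enorm_mollify_rpow_le (k := k) (μ := volume) hGm le_rfl
    simp only [ENNReal.rpow_one] at hL1
    exact (setLIntegral_le_lintegral _ _).trans hL1
  have hvol : volume Q' ≤ volume (Qrs z₀ R τ) :=
    measure_mono (Qrs_subset_Qrs z₀ (by linarith) (by linarith))
  have hosc := h.lintegral_lintegral_enorm_sub_rpow_le (by linarith) (by linarith)
    (sub_le_self R hkpos.le) ordConnected_Ioo measurableSet_Ioo hsmooth
    (fun j => contDiff_mollify (k := k) (hG j))
    (fun j => (by simp [enorm_eq_nnnorm] : ‖(EuclideanSpace.single j 1 : Spc n)‖ₑ ≤ 1))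
    (fun z hz => hvG.fderiv_mollify hv hG (closedBall_subset_Qrs hz)) hr
  rw [finrank_euclideanSpace_fin, ← Measure.volume_eq_prod] at hosc
  exact hosc.trans (mul_le_mul' le_rfl (add_le_add
    (mul_le_mul' (mul_le_mul' le_rfl hvol) (mul_le_mul' le_rfl hgrad))
    (mul_le_mul' (pow_le_pow_left' hvol 2)
      (ENNReal.rpow_le_rpow (mul_le_mul' le_rfl hflux) (by positivity)))))

theorem IsMeanWeight.lintegral_lintegral_enorm_sub_rpow_le_of_weak
    (h : IsMeanWeight volume η z₀.1 R M) (hR : 0 < R)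
    (hv : LocallyIntegrable v) (hg : ∀ j, Measurable (g j)) (hGm : ∀ j, Measurable (G j))
    (hG : ∀ j, LocallyIntegrable (G j))
    (hvg : ∀ j, HasWeakDerivOn volume (Qrs z₀ R τ) v (g j) (EuclideanSpace.single j 1, 0))
    (hvG : HasWeakDivergenceOn volume (Qrs z₀ R τ) v (0, 1) G
      fun j => (EuclideanSpace.single j 1, 0)) (hr : 1 ≤ r) :
    ∫⁻ z in Qrs z₀ R τ, ∫⁻ w in Qrs z₀ R τ, ‖v z - v w‖ₑ ^ r ≤
      3 ^ r * (2 * volume (Qrs z₀ R τ) * (M * 2 ^ n * ENNReal.ofReal (2 * R) ^ r *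
          ∫⁻ z, (∑ j, ‖g j z‖ₑ) ^ r) +
        volume (Qrs z₀ R τ) ^ 2 * (M / (ENNReal.ofReal R * volume (ball z₀.1 R)) *
          ∫⁻ z, ∑ j, ‖G j z‖ₑ) ^ r) := by
  let ε (k : ℕ) : ℝ := R / 2 * (1 / (k + 1))
  have hε0 (k : ℕ) : 0 < ε k := by positivity
  have hεR (k : ℕ) : ε k ≤ R / 2 :=
    mul_le_of_le_one_right (by positivity) (div_le_one_of_le₀ (by simp) (by positivity))
  have hε : Tendsto ε atTop (𝓝 0) := by
    simpa [ε] using (tendsto_one_div_add_atTop_nhds_zero_nat (𝕜 := ℝ)).const_mul (R / 2)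
  let b (k : ℕ) : ContDiffBump (0 : Pt n) :=
    ⟨ε k / 2, ε k, half_pos (hε0 k), half_lt_self (hε0 k)⟩
  have hae : ∀ᵐ z, Tendsto (fun k => mollify volume (b k) v z) atTop (𝓝 (v z)) :=
    ContDiffBump.ae_convolution_tendsto_right_of_locallyIntegrable (K := 2) hε
      (Eventually.of_forall fun k => (mul_div_cancel₀ (ε k) two_ne_zero).ge) hv
  exact lintegral_lintegral_enorm_sub_rpow_le_of_tendsto (measurableSet_Qrs _ _ _)
    (fun k => measurableSet_Qrs _ _ _) (fun z hz => eventually_mem_Qrs_sub hε hz)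
    (fun k => (contDiff_mollify hv).continuous.measurable) hae
    fun k => h.lintegral_lintegral_enorm_mollify_sub_rpow_le (k := b k) (hεR k) hv hg hGm hG hvg
      hvG hr

theorem IsMeanWeight.setLIntegral_setLIntegral_enorm_sub_rpow_le
    (h : IsMeanWeight volume η z₀.1 R M) (hR : 0 < R) (hv : IntegrableOn v (Qrs z₀ R τ))
    (hg : ∀ j, Measurable (g j)) (hGm : ∀ j, Measurable (G j))
    (hG : ∀ j, IntegrableOn (G j) (Qrs z₀ R τ))
    (hvg : ∀ j, HasWeakDerivOn volume (Qrs z₀ R τ) v (g j) (EuclideanSpace.single j 1, 0))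
    (hvG : HasWeakDivergenceOn volume (Qrs z₀ R τ) v (0, 1) G
      fun j => (EuclideanSpace.single j 1, 0)) (hr : 1 ≤ r) :
    ∫⁻ z in Qrs z₀ R τ, ∫⁻ w in Qrs z₀ R τ, ‖v z - v w‖ₑ ^ r ≤
      3 ^ r * (2 * volume (Qrs z₀ R τ) * (M * 2 ^ n * ENNReal.ofReal (2 * R) ^ r *
          ∫⁻ z in Qrs z₀ R τ, (∑ j, ‖g j z‖ₑ) ^ r) +
        volume (Qrs z₀ R τ) ^ 2 * (M / (ENNReal.ofReal R * volume (ball z₀.1 R)) *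
          ∫⁻ z in Qrs z₀ R τ, ∑ j, ‖G j z‖ₑ) ^ r) := by
  set Q := Qrs z₀ R τ
  have hQ : MeasurableSet Q := measurableSet_Qrs z₀ R τ
  have hosc := h.lintegral_lintegral_enorm_sub_rpow_le_of_weak hR
    (hv.integrable_indicator hQ).locallyIntegrable (fun j => (hg j).indicator hQ)
    (fun j => (hGm j).indicator hQ) (fun j => ((hG j).integrable_indicator hQ).locallyIntegrable)
    (fun j => (hvg j).indicator) hvG.indicator hr
  have hosc_eq : ∫⁻ z in Q, ∫⁻ w in Q, ‖Q.indicator v z - Q.indicator v w‖ₑ ^ r =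
      ∫⁻ z in Q, ∫⁻ w in Q, ‖v z - v w‖ₑ ^ r :=
    setLIntegral_congr_fun hQ fun z hz => setLIntegral_congr_fun hQ fun w hw => by
      simp only [indicator_of_mem hz, indicator_of_mem hw]
  have hgrad_eq : ∫⁻ z, (∑ j, ‖Q.indicator (g j) z‖ₑ) ^ r =
      ∫⁻ z in Q, (∑ j, ‖g j z‖ₑ) ^ r := by
    rw [← lintegral_indicator hQ]
    refine lintegral_congr fun z => ?_
    by_cases hz : z ∈ Q <;> simp [hz, zero_lt_one.trans_le hr]
  have hflux_eq : ∫⁻ z, ∑ j, ‖Q.indicator (G j) z‖ₑ = ∫⁻ z in Q, ∑ j, ‖G j z‖ₑ := by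
    rw [← lintegral_indicator hQ]
    refine lintegral_congr fun z => ?_
    by_cases hz : z ∈ Q <;> simp [hz]
  rwa [hosc_eq, hgrad_eq, hflux_eq] at hosc

theorem div_mul_lintegral_Qrs (hR : 0 < R) (f : Pt n → ℝ≥0∞) :
    M / (ENNReal.ofReal R * volume (ball z₀.1 R)) * ∫⁻ z in Qrs z₀ R τ, f z =
      2 * M * ENNReal.ofReal (τ / R) * ⨍⁻ z in Qrs z₀ R τ, f z ∂volume := by
  have hball : volume (ball z₀.1 R) ≠ 0 := (measure_ball_pos _ _ hR).ne'
  have hball' : volume (ball z₀.1 R) ≠ ⊤ := measure_ball_lt_top.ne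
  rw [← measure_mul_setLAverage f (volume_Qrs_ne_top z₀ R τ), ← mul_assoc, volume_Qrs,
    ENNReal.ofReal_mul two_pos.le, ENNReal.ofReal_ofNat, ENNReal.ofReal_div_of_pos hR,
    div_eq_mul_inv, div_eq_mul_inv,
    ENNReal.mul_inv (.inr hball') (.inr hball)]
  congr 1
  calc _ = 2 * M * (ENNReal.ofReal τ * (ENNReal.ofReal R)⁻¹) *
        (volume (ball z₀.1 R) * (volume (ball z₀.1 R))⁻¹) := by ring
    _ = _ := by rw [ENNReal.mul_inv_cancel hball hball', mul_one]

theorem IsMeanWeight.setLAverage_setLAverage_enorm_sub_rpow_le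
    (h : IsMeanWeight volume η z₀.1 R M) (hR : 0 < R) (hτ : 0 < τ)
    (hv : IntegrableOn v (Qrs z₀ R τ)) (hg : ∀ j, Measurable (g j)) (hGm : ∀ j, Measurable (G j))
    (hG : ∀ j, IntegrableOn (G j) (Qrs z₀ R τ))
    (hvg : ∀ j, HasWeakDerivOn volume (Qrs z₀ R τ) v (g j) (EuclideanSpace.single j 1, 0))
    (hvG : HasWeakDivergenceOn volume (Qrs z₀ R τ) v (0, 1) G
      fun j => (EuclideanSpace.single j 1, 0)) (hr : 1 ≤ r) :
    ⨍⁻ z in Qrs z₀ R τ, ⨍⁻ w in Qrs z₀ R τ, ‖v z - v w‖ₑ ^ r ∂volume ∂volume ≤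
      2 * M * 2 ^ n * (6 * ENNReal.ofReal R) ^ r *
          ⨍⁻ z in Qrs z₀ R τ, (∑ j, ‖g j z‖ₑ) ^ r ∂volume +
        (6 * M * ENNReal.ofReal (τ / R) * ⨍⁻ z in Qrs z₀ R τ, ∑ j, ‖G j z‖ₑ ∂volume) ^ r := by
  have hr0 : 0 ≤ r := by positivity
  have hosc := h.setLIntegral_setLIntegral_enorm_sub_rpow_le hR hv hg hGm hG hvg hvG hr
  have hsplit := setLAverage_setLAverage_le (volume_Qrs_ne_zero z₀ hR hτ)
    (volume_Qrs_ne_top z₀ R τ) (hosc.trans_eq (by rw [mul_add, mul_left_comm, mul_assoc 2,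
      mul_left_comm (3 ^ r), mul_left_comm (2 : ℝ≥0∞), mul_left_comm (3 ^ r)]))
  refine hsplit.trans_eq ?_
  rw [div_mul_lintegral_Qrs hR, ← ENNReal.mul_rpow_of_nonneg _ _ hr0,
    ENNReal.ofReal_mul two_pos.le, ENNReal.ofReal_ofNat]
  have hsix : (6 * ENNReal.ofReal R) ^ r = 3 ^ r * (2 * ENNReal.ofReal R) ^ r := by
    rw [← ENNReal.mul_rpow_of_nonneg _ _ hr0, ← mul_assoc]
    norm_num
  rw [hsix]
  congr 1
  · simp only [setLAverage_eq, div_eq_mul_inv]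
    ring
  · congr 1
    ring

end ParabolicPoincare

theorem exists_parabolic_poincare (n : ℕ) : ∃ K : ℝ≥0, ∀ {z₀ : Pt n} {R τ r : ℝ} {v : Pt n → ℝ}
    {g G : Fin n → Pt n → ℝ}, 0 < R → 0 < τ → 1 ≤ r → IntegrableOn v (Qrs z₀ R τ) →
    (∀ j, Measurable (g j)) → (∀ j, Measurable (G j)) →
    (∀ j, IntegrableOn (G j) (Qrs z₀ R τ)) →
    (∀ j, HasWeakDerivOn volume (Qrs z₀ R τ) v (g j) (EuclideanSpace.single j 1, 0)) →
    HasWeakDivergenceOn volume (Qrs z₀ R τ) v (0, 1) G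
      (fun j => (EuclideanSpace.single j 1, 0)) →
    ⨍⁻ z in Qrs z₀ R τ, ⨍⁻ w in Qrs z₀ R τ, ‖v z - v w‖ₑ ^ r ∂volume ∂volume ≤
      (K * ENNReal.ofReal R) ^ r * ⨍⁻ z in Qrs z₀ R τ, (∑ j, ‖g j z‖ₑ) ^ r ∂volume +
        (K * ENNReal.ofReal (τ / R) * ⨍⁻ z in Qrs z₀ R τ, ∑ j, ‖G j z‖ₑ ∂volume) ^ r := by
  obtain ⟨M, hM⟩ := exists_isMeanWeight (volume : Measure (Spc n))
  refine ⟨6 * (1 + 2 * M * 2 ^ n), fun {z₀ R τ r v g G} hR hτ hr hv hg hGm hG hvg hvG => ?_⟩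
  obtain ⟨η, hη⟩ := hM z₀.1 R hR
  have hr0 : 0 ≤ r := by positivity
  refine (hη.setLAverage_setLAverage_enorm_sub_rpow_le hR hτ hv hg hGm hG hvg hvG hr).trans
    (add_le_add (mul_le_mul' ?_ le_rfl)
      (ENNReal.rpow_le_rpow (mul_le_mul' (mul_le_mul' ?_ le_rfl) le_rfl) hr0))
  · calc 2 * M * 2 ^ n * (6 * ENNReal.ofReal R) ^ r
        ≤ (1 + 2 * M * 2 ^ n) ^ r * (6 * ENNReal.ofReal R) ^ r :=
          mul_le_mul' (le_add_self.trans (ENNReal.le_rpow_self_of_one_le le_self_add hr)) le_rfl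
      _ = _ := by
          rw [← ENNReal.mul_rpow_of_nonneg _ _ hr0]
          push_cast
          congr 1
          ring
  · have hM' : M ≤ 1 + 2 * M * 2 ^ n := by
      have : (1 : ℝ≥0) ≤ 2 ^ n := one_le_pow₀ one_le_two
      nlinarith [(zero_le : 0 ≤ M)]
    exact_mod_cast mul_le_mul' le_rfl hM'

/-! ### Energy and flux of a very weak solution -/

theorem abs_apply_le_mnorm {N n : ℕ} (A : Mat N n) (i : Fin N) (j : Fin n) : |A i j| ≤ mnorm A := by
  refine Real.abs_le_sqrt ?_
  rw [sq]
  calc A i j * A i j ≤ ∑ j, A i j * A i j :=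
        Finset.single_le_sum (f := fun j => A i j * A i j) (fun j _ => mul_self_nonneg _)
          (Finset.mem_univ j)
    _ ≤ mdot A A :=
        Finset.single_le_sum (f := fun i => ∑ j, A i j * A i j)
          (fun i _ => Finset.sum_nonneg fun j _ => mul_self_nonneg _) (Finset.mem_univ i)

theorem abs_apply_le_vnorm {N : ℕ} (v : Vec N) (i : Fin N) : |v i| ≤ vnorm v := by
  refine Real.abs_le_sqrt ?_
  rw [sq]
  exact Finset.single_le_sum (f := fun i => v i * v i) (fun i _ => mul_self_nonneg _)
    (Finset.mem_univ i)

theorem vnorm_le_sum_abs {N : ℕ} (v : Vec N) : vnorm v ≤ ∑ i, |v i| := by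
  refine Real.sqrt_le_iff.2 ⟨Finset.sum_nonneg fun i _ => abs_nonneg _, ?_⟩
  simpa only [vdot, sq_abs, sq (v _)] using
    Finset.sum_sq_le_sq_sum_of_nonneg (s := Finset.univ) fun i _ => abs_nonneg (v i)

theorem measurable_mnorm {N n : ℕ} : Measurable (mnorm : Mat N n → ℝ) := by
  unfold mnorm mdot
  fun_prop

theorem measurable_vnorm {N : ℕ} : Measurable (vnorm : Vec N → ℝ) := by
  unfold vnorm vdot
  fun_prop

theorem rpow_le_one_add_rpow {x t b : ℝ} (hx : 0 ≤ x) (ht : 0 ≤ t) (htb : t ≤ b) :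
    x ^ t ≤ 1 + x ^ b := by
  rcases le_total x 1 with hx1 | hx1
  · linarith [Real.rpow_le_one hx hx1 ht, Real.rpow_nonneg hx b]
  · linarith [Real.rpow_le_rpow_of_exponent_le hx1 htb]

section Energy

variable {n N : ℕ} {p q α L₁ L₂ aH : ℝ}

/-- The total energy density `H(z,|∇u|) + H(z,|F|)`. -/
def energy (S : Setting n N p q α L₁ L₂ aH) (Du : Pt n → Mat N n) (z : Pt n) : ℝ :=
  HDu S Du z + HFf S z

/-- The row `i` of the flux `𝒜(z,∇u) − (|F|^{p−2}F + a|F|^{q−2}F)`, whose divergence is `∂ₜuᵢ`. -/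
def flux (S : Setting n N p q α L₁ L₂ aH) (Du : Pt n → Mat N n) (i : Fin N) (j : Fin n)
    (z : Pt n) : ℝ :=
  S.A z (Du z) i j - rhsF S z i j

/-- The majorant `E^{(p−1)/p} + a E^{(q−1)/p}` of the flux in terms of the energy `E`. -/
def fluxMajorant (S : Setting n N p q α L₁ L₂ aH) (Du : Pt n → Mat N n) (z : Pt n) : ℝ :=
  energy S Du z ^ ((p - 1) / p) + S.a z * energy S Du z ^ ((q - 1) / p)

variable (S : Setting n N p q α L₁ L₂ aH) (Du : Pt n → Mat N n)

theorem Hf_nonneg (z : Pt n) {x : ℝ} (hx : 0 ≤ x) : 0 ≤ Hf S.a p q z x :=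
  add_nonneg (Real.rpow_nonneg hx p) (mul_nonneg (S.ha0 z) (Real.rpow_nonneg hx q))

theorem HDu_nonneg (z : Pt n) : 0 ≤ HDu S Du z := Hf_nonneg S z (Real.sqrt_nonneg _)

theorem HFf_nonneg (z : Pt n) : 0 ≤ HFf S z := Hf_nonneg S z (Real.sqrt_nonneg _)

theorem energy_nonneg (z : Pt n) : 0 ≤ energy S Du z :=
  add_nonneg (HDu_nonneg S Du z) (HFf_nonneg S z)

variable {S Du} in
theorem rpow_le_energy_rpow {z : Pt n} {x t : ℝ} (hx : 0 ≤ x) (hE : Hf S.a p q z x ≤ energy S Du z)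
    (ht : 0 ≤ t) : x ^ t ≤ energy S Du z ^ (t / p) := by
  have hp : 0 < p := two_pos.trans S.hp2
  have hxE : x ^ p ≤ energy S Du z :=
    (le_add_of_nonneg_right (mul_nonneg (S.ha0 z) (Real.rpow_nonneg hx q))).trans hE
  calc x ^ t = (x ^ p) ^ (t / p) := by rw [← Real.rpow_mul hx, mul_div_cancel₀ t hp.ne']
    _ ≤ _ := Real.rpow_le_rpow (Real.rpow_nonneg hx p) hxE (by positivity)

theorem mnorm_gradient_rpow_le_energy_rpow (z : Pt n) {t : ℝ} (ht : 0 ≤ t) :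
    mnorm (Du z) ^ t ≤ energy S Du z ^ (t / p) :=
  rpow_le_energy_rpow (Real.sqrt_nonneg _) (le_add_of_nonneg_right (HFf_nonneg S z)) ht

theorem mnorm_source_rpow_le_energy_rpow (z : Pt n) {t : ℝ} (ht : 0 ≤ t) :
    mnorm (S.F z) ^ t ≤ energy S Du z ^ (t / p) :=
  rpow_le_energy_rpow (Real.sqrt_nonneg _) (le_add_of_nonneg_left (HDu_nonneg S Du z)) ht

theorem rpow_sub_one_add_le_fluxMajorant {z : Pt n} {x : ℝ}
    (hx : ∀ t : ℝ, 0 ≤ t → x ^ t ≤ energy S Du z ^ (t / p)) :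
    x ^ (p - 1) + S.a z * x ^ (q - 1) ≤ fluxMajorant S Du z :=
  add_le_add (hx _ (by linarith [S.hp2]))
    (mul_le_mul_of_nonneg_left (hx _ (by linarith [S.hp2, S.hpq])) (S.ha0 z))

theorem abs_rhsF_le (z : Pt n) (i : Fin N) (j : Fin n) :
    |rhsF S z i j| ≤ mnorm (S.F z) ^ (p - 1) + S.a z * mnorm (S.F z) ^ (q - 1) := by
  have hF0 : 0 ≤ mnorm (S.F z) := Real.sqrt_nonneg _
  have hpow (t : ℝ) (ht : 2 < t) :
      |mnorm (S.F z) ^ (t - 2) * S.F z i j| ≤ mnorm (S.F z) ^ (t - 1) := by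
    rw [abs_mul, abs_of_nonneg (by positivity), show t - 1 = t - 2 + 1 by ring,
      Real.rpow_add_one' hF0 (by linarith)]
    gcongr
    exact abs_apply_le_mnorm _ i j
  refine (abs_add_le _ _).trans (add_le_add (hpow p S.hp2) ?_)
  rw [mul_assoc, abs_mul, abs_of_nonneg (S.ha0 z)]
  exact mul_le_mul_of_nonneg_left (hpow q (S.hp2.trans S.hpq)) (S.ha0 z)

theorem abs_rhsF_le_fluxMajorant (z : Pt n) (i : Fin N) (j : Fin n) :
    |rhsF S z i j| ≤ fluxMajorant S Du z :=
  (abs_rhsF_le S z i j).trans (rpow_sub_one_add_le_fluxMajorant S Du fun _ ht =>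
    mnorm_source_rpow_le_energy_rpow S Du z ht)

theorem ae_abs_flux_le_fluxMajorant : ∀ᵐ z ∂(volume.restrict (cyl S.Ω S.T)), ∀ i j,
    |flux S Du i j z| ≤ (L₂ + 1) * fluxMajorant S Du z := by
  filter_upwards [S.hAgrow] with z hA i j
  calc |flux S Du i j z| ≤ |S.A z (Du z) i j| + |rhsF S z i j| := abs_sub _ _
    _ ≤ L₂ * (mnorm (Du z) ^ (p - 1) + S.a z * mnorm (Du z) ^ (q - 1)) + fluxMajorant S Du z :=
        add_le_add ((abs_apply_le_mnorm _ i j).trans (hA (Du z)))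
          (abs_rhsF_le_fluxMajorant S Du z i j)
    _ ≤ L₂ * fluxMajorant S Du z + fluxMajorant S Du z :=
        add_le_add (mul_le_mul_of_nonneg_left (rpow_sub_one_add_le_fluxMajorant S Du fun _ ht =>
          mnorm_gradient_rpow_le_energy_rpow S Du z ht) (S.hL₁.le.trans S.hL₁₂)) le_rfl
    _ = _ := by ring

theorem volume_cyl_ne_top : volume (cyl S.Ω S.T) ≠ ⊤ := by
  rw [cyl, Measure.volume_eq_prod, Measure.prod_prod, Real.volume_Ioo]
  exact ENNReal.mul_ne_top S.hΩb.measure_lt_top.ne ENNReal.ofReal_ne_top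

theorem measurable_rhsF (i : Fin N) (j : Fin n) : Measurable fun z => rhsF S z i j := by
  have hF := S.hFM
  have ha := S.haM
  have hFn := measurable_mnorm.comp hF
  unfold rhsF
  fun_prop

variable {S Du}

theorem measurable_energy (hDu : Measurable Du) : Measurable (energy S Du) := by
  have hH {f : Pt n → Mat N n} (hf : Measurable f) :
      Measurable fun z => Hf S.a p q z (mnorm (f z)) :=
    ((measurable_mnorm.comp hf).pow_const p).add
      (S.haM.mul ((measurable_mnorm.comp hf).pow_const q))
  exact (hH hDu).add (hH S.hFM)

theorem measurable_flux (hDu : Measurable Du) (i : Fin N) (j : Fin n) :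
    Measurable (flux S Du i j) := by
  have hA : Measurable fun z => S.A z (Du z) := S.hAM.comp (measurable_id.prodMk hDu)
  exact ((measurable_pi_apply j).comp ((measurable_pi_apply i).comp hA)).sub (measurable_rhsF S i j)

variable {u : Pt n → Vec N} {δ : ℝ}

theorem VeryWeakSolution.integrableOn_apply (h : VeryWeakSolution S u Du δ) (i : Fin N) :
    IntegrableOn (fun z => u z i) (cyl S.Ω S.T) :=
  h.huL1.mono' ((measurable_pi_apply i).comp h.huM).aestronglyMeasurable
    (Eventually.of_forall fun z => abs_apply_le_vnorm (u z) i)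

theorem VeryWeakSolution.integrableOn_energy_rpow (h : VeryWeakSolution S u Du δ) {t : ℝ}
    (ht : 0 ≤ t) (htδ : t ≤ δ) : IntegrableOn (fun z => energy S Du z ^ t) (cyl S.Ω S.T) := by
  obtain ⟨hδ0, hδ1⟩ := h.hδ
  have hone : IntegrableOn (fun _ => (1 : ℝ)) (cyl S.Ω S.T) :=
    integrableOn_const (volume_cyl_ne_top S)
  refine Integrable.mono' (hone.add (h.henergy.add (hone.add S.hFint)))
    ((measurable_energy h.hDuM).pow_const t).aestronglyMeasurable
    (Eventually.of_forall fun z => ?_)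
  rw [Real.norm_of_nonneg (Real.rpow_nonneg (energy_nonneg S Du z) t)]
  calc energy S Du z ^ t ≤ 1 + energy S Du z ^ δ :=
        rpow_le_one_add_rpow (energy_nonneg S Du z) ht htδ
    _ ≤ 1 + (HDu S Du z ^ δ + HFf S z ^ δ) := by
        gcongr
        exact Real.rpow_add_le_add_rpow (HDu_nonneg S Du z) (HFf_nonneg S z) hδ0.le hδ1.le
    _ ≤ 1 + (HDu S Du z ^ δ + (1 + HFf S z)) := by
        gcongr
        simpa only [Real.rpow_one] using rpow_le_one_add_rpow (HFf_nonneg S z) hδ0.le hδ1.le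

theorem VeryWeakSolution.integrableOn_fluxMajorant (h : VeryWeakSolution S u Du δ)
    (hqδ : (q - 1) / p ≤ δ) : IntegrableOn (fluxMajorant S Du) (cyl S.Ω S.T) := by
  obtain ⟨M, hM⟩ := S.haB
  have hp : 0 < p := two_pos.trans S.hp2
  have hp1 : 0 ≤ (p - 1) / p := div_nonneg (by linarith [S.hp2]) hp.le
  have hpq : (p - 1) / p ≤ (q - 1) / p := by gcongr; exact S.hpq.le
  refine (h.integrableOn_energy_rpow hp1 (hpq.trans hqδ)).add
    ((h.integrableOn_energy_rpow (hp1.trans hpq) hqδ).bdd_mul (c := M) S.haM.aestronglyMeasurable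
      (Eventually.of_forall fun z => ?_))
  rw [Real.norm_of_nonneg (S.ha0 z)]
  exact hM ⟨z, rfl⟩

theorem VeryWeakSolution.integrableOn_rhsF (h : VeryWeakSolution S u Du δ)
    (hqδ : (q - 1) / p ≤ δ) (i : Fin N) (j : Fin n) :
    IntegrableOn (fun z => rhsF S z i j) (cyl S.Ω S.T) :=
  Integrable.mono' (h.integrableOn_fluxMajorant hqδ) (measurable_rhsF S i j).aestronglyMeasurable
    (Eventually.of_forall fun z => abs_rhsF_le_fluxMajorant S Du z i j)

theorem VeryWeakSolution.integrableOn_flux (h : VeryWeakSolution S u Du δ)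
    (hqδ : (q - 1) / p ≤ δ) (i : Fin N) (j : Fin n) :
    IntegrableOn (flux S Du i j) (cyl S.Ω S.T) := by
  refine Integrable.mono' ((h.integrableOn_fluxMajorant hqδ).const_mul (L₂ + 1))
    (measurable_flux h.hDuM i j).aestronglyMeasurable ?_
  filter_upwards [ae_abs_flux_le_fluxMajorant S Du] with z hz using hz i j

end Energy

/-! ### The weak formulation by components -/

section WeakFormulation

variable {n N : ℕ} {p q α L₁ L₂ aH δ : ℝ} {S : Setting n N p q α L₁ L₂ aH} {u : Pt n → Vec N}
  {Du : Pt n → Mat N n} {ψ : Pt n → ℝ}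

theorem vdot_single (v : Vec N) (i : Fin N) (c : ℝ) : vdot v (Pi.single i c) = v i * c := by
  simp [vdot, Pi.single_apply]

theorem mdot_single (B : Mat N n) (i : Fin N) (w : Vec n) :
    mdot B (Pi.single i w) = ∑ j, B i j * w j := by
  rw [mdot, Finset.sum_eq_single i (fun k _ hk => by simp [hk]) (by simp)]
  simp only [Pi.single_eq_same]

theorem dtd_single (hψ : Differentiable ℝ ψ) (i : Fin N) (z : Pt n) :
    dtd (fun w => (Pi.single i (ψ w) : Vec N)) z = Pi.single i (fderiv ℝ ψ z (0, 1)) := by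
  have hcomp : HasFDerivAt (fun w => (Pi.single i (ψ w) : Vec N))
      ((ContinuousLinearMap.single ℝ (fun _ : Fin N => ℝ) i).comp (fderiv ℝ ψ z)) z :=
    (ContinuousLinearMap.single ℝ (fun _ : Fin N => ℝ) i).hasFDerivAt.comp z (hψ z).hasFDerivAt
  rw [dtd, hcomp.fderiv]
  rfl

theorem gradm_single (i : Fin N) (z : Pt n) :
    gradm (fun w => (Pi.single i (ψ w) : Vec N)) z =
      Pi.single i fun j => fderiv ℝ ψ z (EuclideanSpace.single j 1, 0) := by
  ext k j
  by_cases hk : k = i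
  · subst hk
    simp [gradm]
  · simp [gradm, hk]

theorem IsTestFunctionOn.integrableOn_mul_fderiv {Q : Set (Pt n)} (hψ : IsTestFunctionOn ψ Q)
    {v : Pt n → ℝ} {E : Set (Pt n)} (hv : IntegrableOn v E) (e : Pt n) :
    IntegrableOn (fun z => v z * fderiv ℝ ψ z e) E := by
  have hcont := hψ.continuous_fderiv_apply e
  obtain ⟨C, hC⟩ := (hψ.hasCompactSupport.fderiv_apply (𝕜 := ℝ) e).exists_bound_of_continuous hcont
  exact hv.mul_bdd hcont.aestronglyMeasurable (Eventually.of_forall hC)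

theorem VeryWeakSolution.hasWeakDerivOn (h : VeryWeakSolution S u Du δ) (i : Fin N) (j : Fin n) :
    HasWeakDerivOn volume (cyl S.Ω S.T) (fun z => u z i) (fun z => Du z i j)
      (EuclideanSpace.single j 1, 0) := by
  intro ψ hψ
  calc ∫ z, u z i * fderiv ℝ ψ z (EuclideanSpace.single j 1, 0)
      = ∫ z in cyl S.Ω S.T, u z i * fderiv ℝ ψ z (EuclideanSpace.single j 1, 0) :=
        (setIntegral_eq_integral_of_forall_compl_eq_zero fun z hz => by
          simp [hψ.fderiv_eq_zero_of_notMem hz]).symm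
    _ = -∫ z in cyl S.Ω S.T, Du z i j * ψ z :=
        h.hgrad i j ψ hψ.contDiff hψ.hasCompactSupport hψ.tsupport_subset
    _ = -∫ z, Du z i j * ψ z := by
        rw [setIntegral_eq_integral_of_forall_compl_eq_zero fun z hz => by
          simp [hψ.eq_zero_of_notMem hz]]

theorem VeryWeakSolution.setIntegral_eq_of_isTestFunctionOn (h : VeryWeakSolution S u Du δ)
    (hψ : IsTestFunctionOn ψ (cyl S.Ω S.T)) (i : Fin N) :
    ∫ z in cyl S.Ω S.T, (-(u z i * fderiv ℝ ψ z (0, 1)) +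
        ∑ j, S.A z (Du z) i j * fderiv ℝ ψ z (EuclideanSpace.single j 1, 0)) =
      ∫ z in cyl S.Ω S.T, ∑ j, rhsF S z i j * fderiv ℝ ψ z (EuclideanSpace.single j 1, 0) := by
  let ι := ContinuousLinearMap.single ℝ (fun _ : Fin N => ℝ) i
  have hweak := h.hweak (fun w => Pi.single i (ψ w)) (ι.contDiff.comp hψ.contDiff)
    (hψ.hasCompactSupport.comp_left (g := ι) (map_zero ι))
    ((closure_mono (Function.support_comp_subset (map_zero ι) ψ)).trans hψ.tsupport_subset)
  simpa only [dtd_single (hψ.contDiff.differentiable (by simp)), gradm_single, vdot_single,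
    mdot_single] using hweak

theorem VeryWeakSolution.hasWeakDivergenceOn (h : VeryWeakSolution S u Du δ)
    (hqδ : (q - 1) / p ≤ δ) (i : Fin N) :
    HasWeakDivergenceOn volume (cyl S.Ω S.T) (fun z => u z i) (0, 1) (flux S Du i)
      fun j => (EuclideanSpace.single j 1, 0) := by
  intro ψ hψ
  have hu : IntegrableOn (fun z => -(u z i * fderiv ℝ ψ z (0, 1))) (cyl S.Ω S.T) :=
    (hψ.integrableOn_mul_fderiv (h.integrableOn_apply i) (0, 1)).neg
  have hflux : IntegrableOn (fun z => ∑ j, flux S Du i j z *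
      fderiv ℝ ψ z (EuclideanSpace.single j 1, 0)) (cyl S.Ω S.T) :=
    integrable_finsetSum _ fun j _ => hψ.integrableOn_mul_fderiv (h.integrableOn_flux hqδ i j) _
  have hrhs : IntegrableOn (fun z => ∑ j, rhsF S z i j *
      fderiv ℝ ψ z (EuclideanSpace.single j 1, 0)) (cyl S.Ω S.T) :=
    integrable_finsetSum _ fun j _ => hψ.integrableOn_mul_fderiv (h.integrableOn_rhsF hqδ i j) _
  have hA (z : Pt n) : ∑ j, S.A z (Du z) i j * fderiv ℝ ψ z (EuclideanSpace.single j 1, 0) =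
      ∑ j, flux S Du i j z * fderiv ℝ ψ z (EuclideanSpace.single j 1, 0) +
        ∑ j, rhsF S z i j * fderiv ℝ ψ z (EuclideanSpace.single j 1, 0) := by
    simp only [← Finset.sum_add_distrib, ← add_mul, flux, sub_add_cancel]
  have hweak := h.setIntegral_eq_of_isTestFunctionOn hψ i
  simp only [hA, ← add_assoc] at hweak
  rw [integral_add (hu.fun_add hflux) hrhs, add_eq_right, integral_add hu hflux, integral_neg,
    neg_add_eq_zero] at hweak
  rwa [setIntegral_eq_integral_of_forall_compl_eq_zero fun z hz => by
      simp [hψ.fderiv_eq_zero_of_notMem hz],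
    setIntegral_eq_integral_of_forall_compl_eq_zero fun z hz => by
      simp [hψ.fderiv_eq_zero_of_notMem hz]] at hweak

end WeakFormulation

/-! ### The `p`-intrinsic cylinder -/

section Intrinsic

variable {n N : ℕ} {p q α L₁ L₂ aH : ℝ} {S : Setting n N p q α L₁ L₂ aH} {u : Pt n → Vec N}
  {Du : Pt n → Mat N n} {Q : Set (Pt n)} {z₀ : Pt n} {π ρ δ s t θ : ℝ}

theorem Qp_subset_Qp (hπ : 0 ≤ π) (hs : 0 ≤ s) (hst : s ≤ t) : Qp p z₀ π s ⊆ Qp p z₀ π t :=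
  Qrs_subset_Qrs z₀ hst (by gcongr)

theorem volume_Qp_ne_zero (hπ : 0 < π) (hs : 0 < s) : volume (Qp p z₀ π s) ≠ 0 :=
  volume_Qrs_ne_zero z₀ hs (by positivity)

theorem volume_Qp_mul {c : ℝ≥0} (hc : 0 < c) :
    volume (Qp p z₀ π (c * s)) = (c ^ (n + 2) : ℝ≥0) * volume (Qp p z₀ π s) := by
  have hball : volume (ball z₀.1 (c * s)) = ENNReal.ofReal (c ^ n) * volume (ball z₀.1 s) := by
    rw [Measure.addHaar_ball_mul_of_pos volume z₀.1 (NNReal.coe_pos.2 hc) s,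
      Measure.addHaar_ball_center volume z₀.1 s, finrank_euclideanSpace_fin]
  rw [Qp, Qp, volume_Qrs, volume_Qrs, hball,
    show 2 * (π ^ (2 - p) * (c * s) ^ 2) = c ^ 2 * (2 * (π ^ (2 - p) * s ^ 2)) by ring,
    ENNReal.ofReal_mul (by positivity), ← NNReal.coe_pow, ← NNReal.coe_pow,
    ENNReal.ofReal_coe_nnreal, ENNReal.ofReal_coe_nnreal, pow_add, ENNReal.coe_mul]
  ring

theorem setLAverage_le_mul_add_mul {X : Type*} [MeasurableSpace X] {μ : Measure X} {E : Set X}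
    {f g k : X → ℝ≥0∞} {c d : ℝ≥0∞} (hg : Measurable g) (hc : c ≠ ⊤) (hd : d ≠ ⊤)
    (hf : ∀ᵐ x ∂μ.restrict E, f x ≤ c * (g x + d * k x)) :
    ⨍⁻ x in E, f x ∂μ ≤ c * (⨍⁻ x in E, g x ∂μ + d * ⨍⁻ x in E, k x ∂μ) := by
  simp only [laverage]
  refine (lintegral_mono_ae (Measure.ae_smul_measure hf _)).trans_eq ?_
  rw [lintegral_const_mul' _ _ hc, lintegral_add_left hg, lintegral_const_mul' _ _ hd]

theorem PHyp.pi_pos (h : PHyp S Du z₀ π ρ δ) : 0 < π := one_pos.trans h.hπ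

theorem PHyp.Qp_subset_cyl (h : PHyp S Du z₀ π ρ δ) (hs0 : 0 ≤ s) (hs : s ≤ 4 * ρ) :
    Qp p z₀ π s ⊆ cyl S.Ω S.T :=
  (Qp_subset_Qp h.pi_pos.le hs0 (by linarith [h.hρ.1])).trans h.hsub

theorem PHyp.coeff_center_le (h : PHyp S Du z₀ π ρ δ) : S.a z₀ ≤ π ^ (p - q) := by
  rw [Real.rpow_sub h.pi_pos, le_div_iff₀ (Real.rpow_pos_of_pos h.pi_pos q)]
  exact h.hcase

theorem PHyp.four_mul_rpow_le (h : PHyp S Du z₀ π ρ δ) : (4 * ρ) ^ α ≤ 4 * π ^ (p - q) := by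
  have hfour : (4 : ℝ) ^ α ≤ 4 := Real.rpow_le_self_of_one_le (by norm_num) S.hα.2
  rw [Real.mul_rpow (by norm_num) h.hρ.1.le]
  exact mul_le_mul hfour h.hdecay (Real.rpow_nonneg h.hρ.1.le α) (by norm_num)

theorem PHyp.parabolic_dist_rpow_le (h : PHyp S Du z₀ π ρ δ) (hs0 : 0 ≤ s) (hs : s ≤ 4 * ρ)
    {z : Pt n} (hz : z ∈ Qp p z₀ π s) :
    max (‖z.1 - z₀.1‖ ^ α) (|z.2 - z₀.2| ^ (α / 2)) ≤ (4 * ρ) ^ α := by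
  have hρ := h.hρ.1
  have hα := S.hα.1
  obtain ⟨hspace, htime⟩ := hz
  have hscale : π ^ (2 - p) ≤ 1 :=
    Real.rpow_le_one_of_one_le_of_nonpos h.hπ.le (by linarith [S.hp2])
  have hx : ‖z.1 - z₀.1‖ ≤ 4 * ρ := (mem_ball_iff_norm.1 hspace).le.trans hs
  have ht : |z.2 - z₀.2| ≤ (4 * ρ) ^ 2 :=
    calc |z.2 - z₀.2| ≤ π ^ (2 - p) * s ^ 2 :=
          abs_le.2 ⟨by linarith [htime.1], by linarith [htime.2]⟩
      _ ≤ 1 * (4 * ρ) ^ 2 := by gcongr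
      _ = (4 * ρ) ^ 2 := one_mul _
  refine max_le (Real.rpow_le_rpow (norm_nonneg _) hx hα.le) ?_
  calc |z.2 - z₀.2| ^ (α / 2) ≤ ((4 * ρ) ^ 2) ^ (α / 2) :=
        Real.rpow_le_rpow (abs_nonneg _) ht (by positivity)
    _ = (4 * ρ) ^ α := by
        rw [← Real.rpow_two, ← Real.rpow_mul (by positivity), mul_div_cancel₀ α two_ne_zero]

theorem PHyp.coeff_le (h : PHyp S Du z₀ π ρ δ) (hs0 : 0 ≤ s) (hs : s ≤ 4 * ρ) {z : Pt n}
    (hz : z ∈ Qp p z₀ π s) : S.a z ≤ (1 + 4 * aH) * π ^ (p - q) := by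
  have hzΩ := h.Qp_subset_cyl hs0 hs hz
  have hosc : S.a z - S.a z₀ ≤ aH * (4 * π ^ (p - q)) :=
    calc S.a z - S.a z₀ ≤ |S.a z - S.a z₀| := le_abs_self _
      _ ≤ aH * max (‖z.1 - z₀.1‖ ^ α) (|z.2 - z₀.2| ^ (α / 2)) :=
          S.haHol z.1 hzΩ.1 z₀.1 h.hz₀.1 z.2 hzΩ.2 z₀.2 h.hz₀.2
      _ ≤ aH * (4 * π ^ (p - q)) := mul_le_mul_of_nonneg_left
          ((h.parabolic_dist_rpow_le hs0 hs hz).trans h.four_mul_rpow_le) S.haH.le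
  linarith [h.coeff_center_le]

theorem VeryWeakSolution.ofReal_setAverage_energy_rpow (hv : VeryWeakSolution S u Du δ)
    (hQ : Q ⊆ cyl S.Ω S.T) (ht : 0 ≤ t) (htδ : t ≤ δ) :
    ENNReal.ofReal (⨍ z in Q, energy S Du z ^ t) =
      ⨍⁻ z in Q, ENNReal.ofReal (energy S Du z) ^ t ∂volume := by
  rw [ofReal_setAverage ((hv.integrableOn_energy_rpow ht htδ).mono_set hQ)
    (Eventually.of_forall fun z => Real.rpow_nonneg (energy_nonneg S Du z) t)]
  simp only [setLAverage_eq, ENNReal.ofReal_rpow_of_nonneg (energy_nonneg S Du _) ht]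

/-- The mean `(⨍_Q E^θ)^{1/(θp)}` of the energy `E`, which scales like `|∇u|`. -/
def energyMean (S : Setting n N p q α L₁ L₂ aH) (Du : Pt n → Mat N n) (Q : Set (Pt n))
    (θ : ℝ) : ℝ≥0∞ :=
  (⨍⁻ z in Q, ENNReal.ofReal (energy S Du z) ^ θ ∂volume) ^ (θ * p)⁻¹

theorem energyMean_rpow (S : Setting n N p q α L₁ L₂ aH) (Du : Pt n → Mat N n) (Q : Set (Pt n))
    (hθ : 0 < θ) : energyMean S Du Q θ ^ (θ * p) =
      ⨍⁻ z in Q, ENNReal.ofReal (energy S Du z) ^ θ ∂volume :=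
  ENNReal.rpow_inv_rpow (mul_pos hθ (two_pos.trans S.hp2)).ne' _

theorem setLAverage_energy_rpow_le_energyMean_rpow (hDu : Measurable Du) (hQ0 : volume Q ≠ 0)
    (hQ : volume Q ≠ ⊤) (ht : 0 < t) (htθ : t ≤ θ) :
    ⨍⁻ z in Q, ENNReal.ofReal (energy S Du z) ^ t ∂volume ≤ energyMean S Du Q θ ^ (t * p) := by
  have : IsFiniteMeasure (volume.restrict Q) := isFiniteMeasure_restrict.2 hQ
  have : NeZero (volume.restrict Q) := ⟨mt Measure.restrict_eq_zero.1 hQ0⟩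
  have hp : p ≠ 0 := (two_pos.trans S.hp2).ne'
  have hθ : θ ≠ 0 := (ht.trans_le htθ).ne'
  rw [energyMean, ← ENNReal.rpow_mul, show (θ * p)⁻¹ * (t * p) = t / θ by field_simp]
  exact laverage_rpow_le_rpow_laverage (measurable_energy hDu).ennreal_ofReal.aemeasurable ht htθ

theorem energyMean_mono (hDu : Measurable Du) (hQ0 : volume Q ≠ 0) (hQ : volume Q ≠ ⊤)
    (ht : 0 < t) (htθ : t ≤ θ) : energyMean S Du Q t ≤ energyMean S Du Q θ := by
  have hp : 0 < p := two_pos.trans S.hp2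
  rw [← ENNReal.rpow_le_rpow_iff (mul_pos ht hp), energyMean_rpow S Du Q ht]
  exact setLAverage_energy_rpow_le_energyMean_rpow hDu hQ0 hQ ht htθ

theorem PHyp.setLAverage_energy_rpow_le (h : PHyp S Du z₀ π ρ δ) (hv : VeryWeakSolution S u Du δ)
    (hs : 2 * ρ ≤ s) (hs' : s ≤ 4 * ρ) :
    ⨍⁻ z in Qp p z₀ π s, ENNReal.ofReal (energy S Du z) ^ δ ∂volume ≤
      (8 ^ (n + 2) : ℝ≥0) * ENNReal.ofReal π ^ (δ * p) := by
  have hρ := h.hρ.1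
  have hvol : volume (Qp p z₀ π (16 * ρ)) ≤ (8 ^ (n + 2) : ℝ≥0) * volume (Qp p z₀ π s) := by
    rw [← volume_Qp_mul (by norm_num)]
    exact measure_mono (Qp_subset_Qp h.pi_pos.le (by positivity) (by norm_num; linarith))
  calc ⨍⁻ z in Qp p z₀ π s, ENNReal.ofReal (energy S Du z) ^ δ ∂volume
      ≤ (8 ^ (n + 2) : ℝ≥0) *
          ⨍⁻ z in Qp p z₀ π (16 * ρ), ENNReal.ofReal (energy S Du z) ^ δ ∂volume :=
        setLAverage_le_mul_setLAverage (Qp_subset_Qp h.pi_pos.le (by linarith) (by linarith))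
          (volume_Qp_ne_zero h.pi_pos (by positivity)) hvol _
    _ ≤ (8 ^ (n + 2) : ℝ≥0) * ENNReal.ofReal (π ^ (δ * p)) := by
        rw [← hv.ofReal_setAverage_energy_rpow h.hsub hv.hδ.1.le le_rfl]
        exact mul_le_mul' le_rfl (ENNReal.ofReal_le_ofReal h.hup)
    _ = _ := by rw [ENNReal.ofReal_rpow_of_pos h.pi_pos]

theorem PHyp.energyMean_le (h : PHyp S Du z₀ π ρ δ) (hv : VeryWeakSolution S u Du δ)
    (hs : 2 * ρ ≤ s) (hs' : s ≤ 4 * ρ) (hθ : 0 < θ) (hθδ : θ ≤ δ) (hδp : 1 ≤ δ * p) :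
    energyMean S Du (Qp p z₀ π s) θ ≤ (8 ^ (n + 2) : ℝ≥0) * ENNReal.ofReal π := by
  have hs0 : 0 < s := by linarith [h.hρ.1]
  have hδp0 : 0 < δ * p := one_pos.trans_le hδp
  calc energyMean S Du (Qp p z₀ π s) θ ≤ energyMean S Du (Qp p z₀ π s) δ :=
        energyMean_mono hv.hDuM (volume_Qp_ne_zero h.pi_pos hs0) (volume_Qrs_ne_top _ _ _) hθ hθδ
    _ ≤ ((8 ^ (n + 2) : ℝ≥0) * ENNReal.ofReal π ^ (δ * p)) ^ (δ * p)⁻¹ :=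
        ENNReal.rpow_le_rpow (h.setLAverage_energy_rpow_le hv hs hs') (inv_nonneg.2 hδp0.le)
    _ = ((8 ^ (n + 2) : ℝ≥0) : ℝ≥0∞) ^ (δ * p)⁻¹ * ENNReal.ofReal π := by
        rw [ENNReal.mul_rpow_of_nonneg _ _ (inv_nonneg.2 hδp0.le),
          ENNReal.rpow_rpow_inv hδp0.ne']
    _ ≤ (8 ^ (n + 2) : ℝ≥0) * ENNReal.ofReal π := by
        have hone : (1 : ℝ≥0∞) ≤ (8 ^ (n + 2) : ℝ≥0) := by
          exact_mod_cast one_le_pow₀ (by norm_num : (1 : ℝ≥0) ≤ 8)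
        refine mul_le_mul' ?_ le_rfl
        simpa only [ENNReal.rpow_one] using
          ENNReal.rpow_le_rpow_of_exponent_le hone (inv_le_one_of_one_le₀ hδp)

theorem rpow_sub_one_le_of_le_mul {x y C : ℝ≥0∞} (hxy : x ≤ C * y) (ht : 2 ≤ t) :
    x ^ (t - 1) ≤ C ^ (t - 2) * y ^ (t - 2) * x := by
  have ht' : 0 ≤ t - 2 := sub_nonneg.2 ht
  rw [show t - 1 = t - 2 + 1 by ring, ENNReal.rpow_add_of_nonneg _ _ ht' zero_le_one,
    ENNReal.rpow_one, ← ENNReal.mul_rpow_of_nonneg _ _ ht']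
  exact mul_le_mul' (ENNReal.rpow_le_rpow hxy ht') le_rfl

theorem PHyp.setLAverage_energy_rpow_sub_one_le (h : PHyp S Du z₀ π ρ δ)
    (hv : VeryWeakSolution S u Du δ) (hs : 2 * ρ ≤ s) (hs' : s ≤ 4 * ρ) (hqθ : (q - 1) / p < θ)
    (hθδ : θ ≤ δ) (ht : 2 < t) (htq : t ≤ q) :
    ⨍⁻ z in Qp p z₀ π s, ENNReal.ofReal (energy S Du z) ^ ((t - 1) / p) ∂volume ≤
      ((8 ^ (n + 2) : ℝ≥0) : ℝ≥0∞) ^ (t - 2) * ENNReal.ofReal π ^ (t - 2) *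
        energyMean S Du (Qp p z₀ π s) θ := by
  have hp : 0 < p := two_pos.trans S.hp2
  have hs0 : 0 < s := by linarith [h.hρ.1]
  have htp : 0 < (t - 1) / p := div_pos (by linarith) hp
  have htθ : (t - 1) / p ≤ θ := le_trans (by gcongr) hqθ.le
  have hδp : 1 ≤ δ * p := by linarith [(div_lt_iff₀ hp).1 (hqθ.trans_le hθδ)]
  calc ⨍⁻ z in Qp p z₀ π s, ENNReal.ofReal (energy S Du z) ^ ((t - 1) / p) ∂volume
      ≤ energyMean S Du (Qp p z₀ π s) θ ^ ((t - 1) / p * p) :=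
        setLAverage_energy_rpow_le_energyMean_rpow hv.hDuM (volume_Qp_ne_zero h.pi_pos hs0)
          (volume_Qrs_ne_top _ _ _) htp htθ
    _ = energyMean S Du (Qp p z₀ π s) θ ^ (t - 1) := by rw [div_mul_cancel₀ _ hp.ne']
    _ ≤ _ := rpow_sub_one_le_of_le_mul
        (h.energyMean_le hv hs hs' (htp.trans_le htθ) hθδ hδp) ht.le

theorem PHyp.ae_sum_enorm_flux_le (h : PHyp S Du z₀ π ρ δ) (hs0 : 0 ≤ s) (hs : s ≤ 4 * ρ)
    (i : Fin N) : ∀ᵐ z ∂volume.restrict (Qp p z₀ π s), ∑ j, ‖flux S Du i j z‖ₑ ≤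
      n * ENNReal.ofReal (L₂ + 1) * (ENNReal.ofReal (energy S Du z) ^ ((p - 1) / p) +
        ENNReal.ofReal (1 + 4 * aH) * ENNReal.ofReal π ^ (p - q) *
          ENNReal.ofReal (energy S Du z) ^ ((q - 1) / p)) := by
  have hp2 := S.hp2
  have hpq := S.hpq
  have haH := S.haH
  have hπ := h.pi_pos
  have hL : 0 ≤ L₂ + 1 := by linarith [S.hL₁, S.hL₁₂]
  filter_upwards [ae_restrict_of_ae_restrict_of_subset (h.Qp_subset_cyl hs0 hs)
    (ae_abs_flux_le_fluxMajorant S Du), ae_restrict_mem (measurableSet_Qrs _ _ _)] with z hflux hz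
  have hE := energy_nonneg S Du z
  have hterm (j : Fin n) : ‖flux S Du i j z‖ₑ ≤
      ENNReal.ofReal (L₂ + 1) * (ENNReal.ofReal (energy S Du z) ^ ((p - 1) / p) +
        ENNReal.ofReal (1 + 4 * aH) * ENNReal.ofReal π ^ (p - q) *
          ENNReal.ofReal (energy S Du z) ^ ((q - 1) / p)) := by
    rw [ENNReal.ofReal_rpow_of_nonneg hE (div_nonneg (by linarith) (by linarith)),
      ENNReal.ofReal_rpow_of_nonneg hE (div_nonneg (by linarith) (by linarith)),
      ENNReal.ofReal_rpow_of_pos hπ, ← ENNReal.ofReal_mul (by positivity),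
      ← ENNReal.ofReal_mul (by positivity), ← ENNReal.ofReal_add (by positivity) (by positivity),
      ← ENNReal.ofReal_mul hL, Real.enorm_eq_ofReal_abs]
    refine ENNReal.ofReal_le_ofReal ((hflux i j).trans ?_)
    unfold fluxMajorant
    gcongr
    exact h.coeff_le hs0 hs hz
  calc ∑ j, ‖flux S Du i j z‖ₑ ≤ _ := Finset.sum_le_card_nsmul _ _ _ fun j _ => hterm j
    _ = _ := by rw [Finset.card_univ, Fintype.card_fin, nsmul_eq_mul, mul_assoc (n : ℝ≥0∞)]

/-- The constant `C` in the bound `C π^{p−2} (⨍ E^θ)^{1/(θp)}` of the mean flux, obtained from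
`a ≤ (1 + 4[a]_α) π^{p−q}` and `(⨍ E^θ)^{1/(θp)} ≤ 8^{n+2} π`. -/
def fluxConst (n : ℕ) (p q L₂ aH : ℝ) : ℝ≥0 :=
  n * (L₂ + 1).toNNReal *
    ((8 ^ (n + 2)) ^ (p - 2) + (1 + 4 * aH).toNNReal * (8 ^ (n + 2)) ^ (q - 2))

theorem coe_fluxConst (hp : 2 ≤ p) (hq : 2 ≤ q) : (fluxConst n p q L₂ aH : ℝ≥0∞) =
    n * ENNReal.ofReal (L₂ + 1) * (((8 ^ (n + 2) : ℝ≥0) : ℝ≥0∞) ^ (p - 2) +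
      ENNReal.ofReal (1 + 4 * aH) * ((8 ^ (n + 2) : ℝ≥0) : ℝ≥0∞) ^ (q - 2)) := by
  rw [fluxConst, ← ENNReal.coe_rpow_of_nonneg _ (sub_nonneg.2 hp),
    ← ENNReal.coe_rpow_of_nonneg _ (sub_nonneg.2 hq)]
  push_cast
  rfl

theorem PHyp.setLAverage_sum_enorm_flux_le (h : PHyp S Du z₀ π ρ δ)
    (hv : VeryWeakSolution S u Du δ) (hs : 2 * ρ ≤ s) (hs' : s ≤ 4 * ρ) (hqθ : (q - 1) / p < θ)
    (hθδ : θ ≤ δ) (i : Fin N) :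
    ⨍⁻ z in Qp p z₀ π s, ∑ j, ‖flux S Du i j z‖ₑ ∂volume ≤ fluxConst n p q L₂ aH *
      (ENNReal.ofReal π ^ (p - 2) * energyMean S Du (Qp p z₀ π s) θ) := by
  have hp2 := S.hp2
  have hpq := S.hpq
  have hs0 : 0 < s := by linarith [h.hρ.1]
  have hπ0 : ENNReal.ofReal π ≠ 0 := (ENNReal.ofReal_pos.2 h.pi_pos).ne'
  set M := energyMean S Du (Qp p z₀ π s) θ
  have hmean {t : ℝ} (ht : 2 < t) (htq : t ≤ q) :=
    h.setLAverage_energy_rpow_sub_one_le hv hs hs' hqθ hθδ ht htq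
  calc ⨍⁻ z in Qp p z₀ π s, ∑ j, ‖flux S Du i j z‖ₑ ∂volume
      ≤ n * ENNReal.ofReal (L₂ + 1) *
          (((8 ^ (n + 2) : ℝ≥0) : ℝ≥0∞) ^ (p - 2) * ENNReal.ofReal π ^ (p - 2) * M +
            ENNReal.ofReal (1 + 4 * aH) * ENNReal.ofReal π ^ (p - q) *
              (((8 ^ (n + 2) : ℝ≥0) : ℝ≥0∞) ^ (q - 2) * ENNReal.ofReal π ^ (q - 2) * M)) :=
        (setLAverage_le_mul_add_mul ((measurable_energy hv.hDuM).ennreal_ofReal.pow_const _)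
          (by finiteness) (by finiteness) (h.ae_sum_enorm_flux_le hs0.le hs' i)).trans
            (by gcongr <;> exact hmean (by linarith) (by linarith))
    _ = _ := by
        have hsplit : ENNReal.ofReal π ^ (p - 2) =
            ENNReal.ofReal π ^ (p - q) * ENNReal.ofReal π ^ (q - 2) := by
          rw [← ENNReal.rpow_add _ _ hπ0 ENNReal.ofReal_ne_top, sub_add_sub_cancel]
        rw [coe_fluxConst hp2.le (hp2.trans hpq).le, hsplit]
        ring

theorem setLAverage_sum_enorm_gradient_rpow_le (S : Setting n N p q α L₁ L₂ aH)
    (Du : Pt n → Mat N n) (Q : Set (Pt n)) (hθ : 0 < θ) (i : Fin N) :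
    ⨍⁻ z in Q, (∑ j, ‖Du z i j‖ₑ) ^ (θ * p) ∂volume ≤
      (n : ℝ≥0∞) ^ (θ * p) * ⨍⁻ z in Q, ENNReal.ofReal (energy S Du z) ^ θ ∂volume := by
  have hp : 0 < p := two_pos.trans S.hp2
  have hθp : 0 ≤ θ * p := by positivity
  rw [laverage, laverage, ← lintegral_const_mul' _ _ (by finiteness)]
  refine lintegral_mono fun z => ?_
  have hsum : ∑ j, ‖Du z i j‖ₑ ≤ n * ENNReal.ofReal (mnorm (Du z)) := by
    refine (Finset.sum_le_card_nsmul _ _ _ fun j _ => ?_).trans_eq (by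
      rw [Finset.card_univ, Fintype.card_fin, nsmul_eq_mul])
    rw [Real.enorm_eq_ofReal_abs]
    exact ENNReal.ofReal_le_ofReal (abs_apply_le_mnorm _ i j)
  have hgrad : ENNReal.ofReal (mnorm (Du z)) ^ (θ * p) ≤ ENNReal.ofReal (energy S Du z) ^ θ := by
    have hDu0 : 0 ≤ mnorm (Du z) := Real.sqrt_nonneg _
    rw [ENNReal.ofReal_rpow_of_nonneg hDu0 hθp,
      ENNReal.ofReal_rpow_of_nonneg (energy_nonneg S Du z) hθ.le]
    refine ENNReal.ofReal_le_ofReal ((mnorm_gradient_rpow_le_energy_rpow S Du z hθp).trans_eq ?_)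
    rw [mul_div_cancel_right₀ _ hp.ne']
  calc (∑ j, ‖Du z i j‖ₑ) ^ (θ * p) ≤ (n * ENNReal.ofReal (mnorm (Du z))) ^ (θ * p) :=
        ENNReal.rpow_le_rpow hsum hθp
    _ = n ^ (θ * p) * ENNReal.ofReal (mnorm (Du z)) ^ (θ * p) :=
        ENNReal.mul_rpow_of_nonneg _ _ hθp
    _ ≤ n ^ (θ * p) * ENNReal.ofReal (energy S Du z) ^ θ := mul_le_mul' le_rfl hgrad

end Intrinsic

/-! ### From the components to the vector -/

section Components

variable {n N : ℕ} {u : Pt n → Vec N} {Q : Set (Pt n)} {r s : ℝ}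

theorem ofReal_vnorm_rpow_le (v : Vec N) (hr : 1 ≤ r) :
    ENNReal.ofReal (vnorm v) ^ r ≤ (N : ℝ≥0∞) ^ (r - 1) * ∑ i, ‖v i‖ₑ ^ r := by
  calc ENNReal.ofReal (vnorm v) ^ r ≤ (∑ i, ‖v i‖ₑ) ^ r := by
        refine ENNReal.rpow_le_rpow ?_ (by positivity)
        simp only [Real.enorm_eq_ofReal_abs]
        rw [← ENNReal.ofReal_sum_of_nonneg fun i _ => abs_nonneg (v i)]
        exact ENNReal.ofReal_le_ofReal (vnorm_le_sum_abs v)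
    _ ≤ (N : ℝ≥0∞) ^ (r - 1) * ∑ i, ‖v i‖ₑ ^ r := by
        simpa only [Finset.card_univ, Fintype.card_fin] using
          ENNReal.rpow_sum_le_const_mul_sum_rpow (s := Finset.univ) (f := fun i => ‖v i‖ₑ) hr

theorem setLAverage_vnorm_sub_vavg_rpow_le (hQ0 : volume Q ≠ 0) (hQ : volume Q ≠ ⊤)
    (hu : Measurable u) (hint : ∀ i, IntegrableOn (fun z => u z i) Q) (hr : 1 ≤ r) {B : ℝ≥0∞}
    (hB : ∀ i, ⨍⁻ z in Q, ⨍⁻ w in Q, ‖u z i - u w i‖ₑ ^ r ∂volume ∂volume ≤ B) :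
    ⨍⁻ z in Q, ENNReal.ofReal (vnorm (u z - vavg u Q)) ^ r ∂volume ≤ (N : ℝ≥0∞) ^ r * B := by
  have : IsFiniteMeasure (volume.restrict Q) := isFiniteMeasure_restrict.2 hQ
  have : NeZero (volume.restrict Q) := ⟨mt Measure.restrict_eq_zero.1 hQ0⟩
  have hr' : 0 ≤ r - 1 := sub_nonneg.2 hr
  have hmeas (i : Fin N) : Measurable fun z => ‖u z i - ⨍ w in Q, u w i‖ₑ ^ r :=
    (((measurable_pi_apply i).comp hu).sub_const _).enorm.pow_const r
  calc ⨍⁻ z in Q, ENNReal.ofReal (vnorm (u z - vavg u Q)) ^ r ∂volume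
      ≤ ⨍⁻ z in Q, (N : ℝ≥0∞) ^ (r - 1) * ∑ i, ‖u z i - ⨍ w in Q, u w i‖ₑ ^ r ∂volume :=
        lintegral_mono fun z => ofReal_vnorm_rpow_le _ hr
    _ = (N : ℝ≥0∞) ^ (r - 1) * ∑ i, ⨍⁻ z in Q, ‖u z i - ⨍ w in Q, u w i‖ₑ ^ r ∂volume := by
        rw [laverage, lintegral_const_mul' _ _ (by finiteness),
          lintegral_finsetSum _ fun i _ => hmeas i]
        rfl
    _ ≤ (N : ℝ≥0∞) ^ (r - 1) * ∑ _i : Fin N, B :=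
        mul_le_mul' le_rfl (Finset.sum_le_sum fun i _ =>
          (laverage_enorm_sub_average_rpow_le (hint i) hr).trans (hB i))
    _ = (N : ℝ≥0∞) ^ r * B := by
        rw [Finset.sum_const, Finset.card_univ, Fintype.card_fin, nsmul_eq_mul, ← mul_assoc]
        nth_rewrite 2 [← ENNReal.rpow_one (N : ℝ≥0∞)]
        rw [← ENNReal.rpow_add_of_nonneg _ _ hr' zero_le_one, sub_add_cancel]

theorem setAverage_vnorm_sub_vavg_rpow_le (hQ0 : volume Q ≠ 0) (hQ : volume Q ≠ ⊤)
    (hu : Measurable u) (hint : ∀ i, IntegrableOn (fun z => u z i) Q) (hr : 1 ≤ r) (hs : 0 < s)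
    {K : ℝ≥0} {e : ℝ} (he : 0 ≤ e)
    (hK : ∀ i, ⨍⁻ z in Q, ⨍⁻ w in Q, ‖u z i - u w i‖ₑ ^ r ∂volume ∂volume ≤
      (K * ENNReal.ofReal s) ^ r * ENNReal.ofReal e) :
    ⨍ z in Q, vnorm (u z - vavg u Q) ^ r / s ^ r ≤ (N * K) ^ r * e := by
  have hr0 : 0 ≤ r := by positivity
  have hnorm (z : Pt n) : 0 ≤ vnorm (u z - vavg u Q) := Real.sqrt_nonneg _
  have hmeas : Measurable fun z => ENNReal.ofReal (vnorm (u z - vavg u Q)) ^ r :=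
    (measurable_vnorm.comp (hu.sub_const _)).ennreal_ofReal.pow_const r
  have hreal : ⨍ z in Q, vnorm (u z - vavg u Q) ^ r =
      (⨍⁻ z in Q, ENNReal.ofReal (vnorm (u z - vavg u Q)) ^ r ∂volume).toReal := by
    rw [toReal_setLAverage hmeas.aemeasurable (Eventually.of_forall fun z => by finiteness)]
    simp only [← ENNReal.toReal_rpow, ENNReal.toReal_ofReal (hnorm _)]
  have hbound : ⨍ z in Q, vnorm (u z - vavg u Q) ^ r ≤ (N * K) ^ r * e * s ^ r := by
    rw [hreal]
    refine ENNReal.toReal_le_of_le_ofReal (by positivity) ?_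
    refine (setLAverage_vnorm_sub_vavg_rpow_le hQ0 hQ hu hint hr hK).trans_eq ?_
    rw [ENNReal.ofReal_mul (by positivity), ENNReal.ofReal_mul (by positivity),
      ← ENNReal.ofReal_rpow_of_nonneg (by positivity) hr0,
      ← ENNReal.ofReal_rpow_of_nonneg hs.le hr0, ENNReal.ofReal_mul (by positivity),
      ENNReal.ofReal_natCast, ENNReal.ofReal_coe_nnreal, ENNReal.mul_rpow_of_nonneg _ _ hr0,
      ENNReal.mul_rpow_of_nonneg _ _ hr0]
    ring
  calc ⨍ z in Q, vnorm (u z - vavg u Q) ^ r / s ^ r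
      = (⨍ z in Q, vnorm (u z - vavg u Q) ^ r) / s ^ r := integral_div _ _
    _ ≤ (N * K) ^ r * e := (div_le_iff₀ (by positivity)).2 hbound

end Components

/-! ### The component-wise inequality on a `p`-intrinsic cylinder -/

theorem ofReal_intrinsic_time_div_mul_rpow (p : ℝ) {π s : ℝ} (hπ : 0 < π) (hs : 0 < s) :
    ENNReal.ofReal (π ^ (2 - p) * s ^ 2 / s) * ENNReal.ofReal π ^ (p - 2) = ENNReal.ofReal s := by
  have hcancel : π ^ (2 - p) * π ^ (p - 2) = 1 := by
    rw [← Real.rpow_add hπ, sub_add_sub_cancel, sub_self, Real.rpow_zero]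
  rw [ENNReal.ofReal_rpow_of_pos hπ, ← ENNReal.ofReal_mul (by positivity),
    show π ^ (2 - p) * s ^ 2 / s * π ^ (p - 2) = π ^ (2 - p) * π ^ (p - 2) * s by field_simp,
    hcancel, one_mul]

theorem mul_rpow_add_mul_rpow_le {K C m M τ y σ : ℝ≥0∞} {r : ℝ} (hσ : τ * y = σ) (hr : 1 ≤ r) :
    (K * σ) ^ r * (m ^ r * M ^ r) + (K * τ * (C * (y * M))) ^ r ≤
      (K * (m + C) * σ) ^ r * M ^ r := by
  have hr0 : 0 ≤ r := by positivity
  simp only [← ENNReal.mul_rpow_of_nonneg _ _ hr0]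
  calc (K * σ * (m * M)) ^ r + (K * τ * (C * (y * M))) ^ r
      ≤ (K * σ * (m * M) + K * τ * (C * (y * M))) ^ r := ENNReal.add_rpow_le_rpow_add _ _ hr
    _ = (K * (m + C) * σ * M) ^ r := by rw [← hσ]; ring_nf

theorem exists_intrinsic_component_poincare (n N : ℕ) (p q α L₁ L₂ aH : ℝ) : ∃ K : ℝ≥0,
    ∀ {S : Setting n N p q α L₁ L₂ aH} {u : Pt n → Vec N} {Du : Pt n → Mat N n} {z₀ : Pt n}
      {π ρ δ θ s : ℝ}, VeryWeakSolution S u Du δ → PHyp S Du z₀ π ρ δ → (q - 1) / p < θ → θ ≤ δ →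
      2 * ρ ≤ s → s ≤ 4 * ρ → ∀ i,
      ⨍⁻ z in Qp p z₀ π s, ⨍⁻ w in Qp p z₀ π s, ‖u z i - u w i‖ₑ ^ (θ * p) ∂volume ∂volume ≤
        (K * ENNReal.ofReal s) ^ (θ * p) *
          ⨍⁻ z in Qp p z₀ π s, ENNReal.ofReal (energy S Du z) ^ θ ∂volume := by
  obtain ⟨K, hK⟩ := exists_parabolic_poincare n
  refine ⟨K * (n + fluxConst n p q L₂ aH), fun {S u Du z₀ π ρ δ θ s} hv h hqθ hθδ hs hs' i => ?_⟩
  have hp : 0 < p := two_pos.trans S.hp2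
  have hπ := h.pi_pos
  have hs0 : 0 < s := by linarith [h.hρ.1]
  have hθ : 0 < θ := (div_pos (by linarith [S.hp2, S.hpq]) hp).trans hqθ
  have hθp : 1 ≤ θ * p := by linarith [(div_lt_iff₀ hp).1 hqθ, S.hp2, S.hpq]
  have hqδ : (q - 1) / p ≤ δ := hqθ.le.trans hθδ
  have hsub := h.Qp_subset_cyl hs0.le hs'
  have hpoincare := hK (r := θ * p) hs0 (by positivity : 0 < π ^ (2 - p) * s ^ 2) hθp
    ((hv.integrableOn_apply i).mono_set hsub)
    (fun j => (measurable_pi_apply j).comp ((measurable_pi_apply i).comp hv.hDuM))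
    (measurable_flux hv.hDuM i) (fun j => (hv.integrableOn_flux hqδ i j).mono_set hsub)
    (fun j => (hv.hasWeakDerivOn i j).mono hsub) ((hv.hasWeakDivergenceOn hqδ i).mono hsub)
  calc _ ≤ (K * ENNReal.ofReal s) ^ (θ * p) *
          (n ^ (θ * p) * energyMean S Du (Qp p z₀ π s) θ ^ (θ * p)) +
        (K * ENNReal.ofReal (π ^ (2 - p) * s ^ 2 / s) * (fluxConst n p q L₂ aH *
          (ENNReal.ofReal π ^ (p - 2) * energyMean S Du (Qp p z₀ π s) θ))) ^ (θ * p) := by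
        rw [energyMean_rpow S Du _ hθ]
        refine hpoincare.trans (add_le_add (mul_le_mul' le_rfl
          (setLAverage_sum_enorm_gradient_rpow_le S Du _ hθ i)) (ENNReal.rpow_le_rpow
            (mul_le_mul' le_rfl (h.setLAverage_sum_enorm_flux_le hv hs hs' hqθ hθδ i)) ?_))
        positivity
    _ ≤ _ := by
        rw [← energyMean_rpow S Du _ hθ]
        push_cast
        exact mul_rpow_add_mul_rpow_le (ofReal_intrinsic_time_div_mul_rpow p hπ hs0) hθp

end DoublePhase

/-- Lemma 4.2: Poincaré-type inequality in the `p`-intrinsic case. -/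
theorem p_intrinsic_poincare (n N : ℕ) (p q α L₁ L₂ aH : ℝ) :
    ∃ c : ℝ, 0 < c ∧
      ∀ (S : Setting n N p q α L₁ L₂ aH) (u : Pt n → Vec N) (Du : Pt n → Mat N n) (δ : ℝ),
        VeryWeakSolution S u Du δ →
        ∀ (z₀ : Pt n) (π ρ : ℝ), PHyp S Du z₀ π ρ δ →
        ∀ θ ∈ Set.Ioc ((q - 1) / p) δ, ∀ s ∈ Set.Icc (2 * ρ) (4 * ρ),
          (⨍ z in Qp p z₀ π s,
              vnorm (u z - vavg u (Qp p z₀ π s)) ^ (θ * p) / s ^ (θ * p))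
            ≤ c * (⨍ z in Qp p z₀ π s, (HDu S Du z + HFf S z) ^ θ) := by
  obtain ⟨K, hK⟩ := exists_intrinsic_component_poincare n N p q α L₁ L₂ aH
  refine ⟨(1 + N * K) ^ p, by positivity, fun S u Du δ hv z₀ π ρ h θ hθ s hs => ?_⟩
  have hp : 0 < p := two_pos.trans S.hp2
  have hs0 : 0 < s := by linarith [h.hρ.1, hs.1]
  have hθ0 : 0 < θ := (div_pos (by linarith [S.hp2, S.hpq]) hp).trans hθ.1
  have hθp : 1 ≤ θ * p := by linarith [(div_lt_iff₀ hp).1 hθ.1, S.hp2, S.hpq]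
  have hθp' : θ * p ≤ p := mul_le_of_le_one_left hp.le (hθ.2.trans hv.hδ.2.le)
  have hsub := h.Qp_subset_cyl hs0.le hs.2
  have hmean : 0 ≤ ⨍ z in Qp p z₀ π s, energy S Du z ^ θ :=
    integral_nonneg fun z => Real.rpow_nonneg (energy_nonneg S Du z) θ
  have hcomponent := hK hv h hθ.1 hθ.2 hs.1 hs.2
  rw [← hv.ofReal_setAverage_energy_rpow hsub hθ0.le hθ.2] at hcomponent
  calc ⨍ z in Qp p z₀ π s, vnorm (u z - vavg u (Qp p z₀ π s)) ^ (θ * p) / s ^ (θ * p)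
      ≤ (N * K) ^ (θ * p) * ⨍ z in Qp p z₀ π s, energy S Du z ^ θ :=
        setAverage_vnorm_sub_vavg_rpow_le (volume_Qp_ne_zero h.pi_pos hs0)
          (volume_Qrs_ne_top _ _ _) hv.huM (fun i => (hv.integrableOn_apply i).mono_set hsub)
          hθp hs0 hmean hcomponent
    _ ≤ (1 + N * K) ^ p * ⨍ z in Qp p z₀ π s, energy S Du z ^ θ := by
        have hNK : (0 : ℝ) ≤ N * K := by positivity
        exact mul_le_mul_of_nonneg_right ((Real.rpow_le_rpow hNK (by linarith) (by linarith)).trans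
          (Real.rpow_le_rpow_of_exponent_le (by linarith) hθp')) hmean
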